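/- arXiv:0809.0086 — 5 statements merged into one kernel-verified Lean document; each statement's English description precedes it below -/
import Mathlib

section
/- Let R be a commutative ring, n a positive integer, and A = (a_{ij}) an invertible symmetric n×n matrix over R with inverse (a^{ij}). Define D_i on R[x_1,…,x_n] by D_i(g) = Σ_j a^{ij} ∂g/∂x_j + x_i·g. Then for every 0 ≤ s ≤ n, the composite of the inclusion R[x_{s+1},…,x_n] ↪ R[x_1,…,x_n] with the quotient map R[x_1,…,x_n] → R[x_1,…,x_n] / (D_1(R[x_1,…,x_n]) + ⋯ + D_s(R[x_1,…,x_n])) is an isomorphism of R-modules. In particular, for s = n the quotient R[x_1,…,x_n] / (Σ_{i=1}^n D_i(R[x_1,…,x_n])) is isomorphic to R, generated by the class of the constant polynomial 1. -/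
open MvPolynomial

noncomputable section

/-- The operator `D_i(g) = Σ_j a^{ij} ∂g/∂x_j + x_i·g` on `R[x_1,…,x_n]`,
where `B = (a^{ij})` is the inverse matrix of `A`. -/
def Dop {n : ℕ} {R : Type*} [CommRing R] (B : Matrix (Fin n) (Fin n) R)
    (i : Fin n) (g : MvPolynomial (Fin n) R) : MvPolynomial (Fin n) R :=
  (∑ j, C (B i j) * pderiv j g) + X i * g

/-- The `R`-submodule `D_1(R[x]) + ⋯ + D_s(R[x])` of `R[x_1,…,x_n]` generated by
the images of the operators `D_i` for `i < s` (indices `0,…,s-1` of `Fin n`). -/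
def DopSpan {n : ℕ} {R : Type*} [CommRing R] (B : Matrix (Fin n) (Fin n) R)
    (s : ℕ) : Submodule R (MvPolynomial (Fin n) R) :=
  Submodule.span R
    {p | ∃ (i : Fin n) (g : MvPolynomial (Fin n) R), (i : ℕ) < s ∧ p = Dop B i g}

/-- linear version -/
def DL {n : ℕ} {R : Type*} [CommRing R] (B : Matrix (Fin n) (Fin n) R)
    (i : Fin n) : Module.End R (MvPolynomial (Fin n) R) :=
  (∑ j, B i j • (pderiv j).toLinearMap) + LinearMap.mulLeft R (X i)

lemma DL_apply {n : ℕ} {R : Type*} [CommRing R] (B : Matrix (Fin n) (Fin n) R)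
    (i : Fin n) (g : MvPolynomial (Fin n) R) : DL B i g = Dop B i g := by
  simp [DL, Dop, LinearMap.sum_apply, MvPolynomial.smul_eq_C_mul]

lemma pderiv_comm_aux {n : ℕ} {R : Type*} [CommRing R] (i j : Fin n)
    (g : MvPolynomial (Fin n) R) : pderiv i (pderiv j g) = pderiv j (pderiv i g) := by
  have h : ⁅(pderiv i : Derivation R (MvPolynomial (Fin n) R) (MvPolynomial (Fin n) R)), (pderiv j : Derivation R (MvPolynomial (Fin n) R) (MvPolynomial (Fin n) R))⁆ = 0 := by
    apply MvPolynomial.derivation_ext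
    intro k
    rw [Derivation.commutator_apply]
    simp only [pderiv_X, Pi.single_apply]
    split_ifs <;> simp
  have h2 := congrArg (fun d => d g) h
  simp only [Derivation.commutator_apply, Derivation.zero_apply] at h2
  exact sub_eq_zero.mp h2

lemma pderiv_Dop {n : ℕ} {R : Type*} [CommRing R] (B : Matrix (Fin n) (Fin n) R)
    (i k : Fin n) (g : MvPolynomial (Fin n) R) :
    pderiv k (Dop B i g) = Dop B i (pderiv k g) + pderiv k (X i) * g := by
  simp only [Dop, map_add, map_sum, Derivation.leibniz, smul_eq_mul, pderiv_C, mul_zero, add_zero]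
  rw [Finset.sum_congr rfl (fun j _ => by rw [pderiv_comm_aux k j g])]
  ring

lemma Dop_comm {n : ℕ} {R : Type*} [CommRing R] (B : Matrix (Fin n) (Fin n) R)
    (hB : B.IsSymm) (i k : Fin n) (g : MvPolynomial (Fin n) R) :
    Dop B i (Dop B k g) = Dop B k (Dop B i g) := by
  have key : ∀ i k : Fin n, Dop B i (Dop B k g) =
      (∑ j, ∑ l, C (B i j) * (C (B k l) * pderiv j (pderiv l g)))
      + (∑ j, C (B i j) * (X k * pderiv j g)) + C (B i k) * g
      + (∑ j, C (B k j) * (X i * pderiv j g)) + X i * X k * g := by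
    intro i k
    have h1 : Dop B i (Dop B k g) = (∑ j, C (B i j) * pderiv j (Dop B k g)) + X i * Dop B k g := rfl
    rw [h1]
    have h2 : ∀ j, C (B i j) * pderiv j (Dop B k g) =
        (∑ l, C (B i j) * (C (B k l) * pderiv j (pderiv l g))) + C (B i j) * (X k * pderiv j g)
          + C (B i j) * (pderiv j (X k) * g) := by
      intro j
      rw [pderiv_Dop, Dop, mul_add, mul_add, Finset.mul_sum]
      rw [Finset.sum_congr rfl (fun l _ => by rw [pderiv_comm_aux l j g])]
    simp only [h2, Finset.sum_add_distrib]
    have h3 : ∑ j, C (B i j) * (pderiv j (X k) * g) = C (B i k) * g := by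
      rw [Finset.sum_eq_single k]
      · simp
      · intro j _ hj
        rw [pderiv_X_of_ne (Ne.symm hj)]; simp
      · simp
    rw [h3]
    simp only [Dop, mul_add, Finset.mul_sum]
    rw [Finset.sum_congr rfl (fun j _ => mul_left_comm (X i) (C (B k j)) (pderiv j g))]
    ring
  rw [key, key, hB.apply k i]
  rw [Finset.sum_comm]
  have h4 : ∀ y x : Fin n, C (B i x) * (C (B k y) * pderiv x (pderiv y g)) =
      C (B k y) * (C (B i x) * pderiv y (pderiv x g)) := by
    intro y x
    rw [pderiv_comm_aux x y, mul_left_comm]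
  simp only [h4]
  ring

lemma exists_psi {n : ℕ} {R : Type*} [CommRing R] (B : Matrix (Fin n) (Fin n) R)
    (hB : B.IsSymm) : ∃ f : MvPolynomial (Fin n) R →ₗ[R] MvPolynomial (Fin n) R,
      f 1 = 1 ∧ ∀ i g, f (X i * g) = Dop B i (f g) := by
  have hc : ∀ a ∈ Set.range (DL B), ∀ b ∈ Set.range (DL B), a * b = b * a := by
    rintro _ ⟨i, rfl⟩ _ ⟨k, rfl⟩
    apply LinearMap.ext
    intro g
    simp only [Module.End.mul_apply, DL_apply]
    exact Dop_comm B hB i k g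
  letI : CommRing (Algebra.adjoin R (Set.range (DL B))) := Algebra.adjoinCommRingOfComm R hc
  let a : Fin n → Algebra.adjoin R (Set.range (DL B)) :=
    fun i => ⟨DL B i, Algebra.subset_adjoin ⟨i, rfl⟩⟩
  let F : MvPolynomial (Fin n) R →ₐ[R] Algebra.adjoin R (Set.range (DL B)) := aeval a
  let G : MvPolynomial (Fin n) R →ₐ[R] Module.End R (MvPolynomial (Fin n) R) :=
    (Algebra.adjoin R (Set.range (DL B))).val.comp F
  have hG : ∀ i, G (X i) = DL B i := by
    intro i
    simp [G, F, a]
  refine ⟨(LinearMap.applyₗ (1 : MvPolynomial (Fin n) R)).comp G.toLinearMap, ?_, ?_⟩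
  · simp
  · intro i g
    simp [hG, DL_apply]

lemma mv_induct {n : ℕ} {R : Type*} [CommRing R]
    {f g : MvPolynomial (Fin n) R →ₗ[R] MvPolynomial (Fin n) R} (h1 : f 1 = g 1)
    (hX : ∀ i p, f p = g p → f (X i * p) = g (X i * p)) (p : MvPolynomial (Fin n) R) :
    f p = g p := by
  induction p using MvPolynomial.induction_on with
  | C a =>
    have : (C a : MvPolynomial (Fin n) R) = a • 1 := by rw [MvPolynomial.smul_eq_C_mul, mul_one]
    rw [this, map_smul, map_smul, h1]
  | add p q hp hq => rw [map_add, map_add, hp, hq]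
  | mul_X p i hp => rw [mul_comm]; exact hX i p hp

lemma psi_pderiv {n : ℕ} {R : Type*} [CommRing R] (B : Matrix (Fin n) (Fin n) R)
    (f : MvPolynomial (Fin n) R →ₗ[R] MvPolynomial (Fin n) R)
    (h1 : f 1 = 1) (hX : ∀ i g, f (X i * g) = Dop B i (f g)) (k : Fin n)
    (p : MvPolynomial (Fin n) R) : f (pderiv k p) = pderiv k (f p) := by
  refine mv_induct (f := f.comp (pderiv k).toLinearMap) (g := (pderiv k).toLinearMap.comp f)
    ?_ ?_ p
  · simp [h1]
  · intro i p hp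
    simp only [LinearMap.comp_apply, Derivation.coeFn_coe] at hp ⊢
    rw [hX, pderiv_Dop, ← hp, Derivation.leibniz, smul_eq_mul, smul_eq_mul, map_add, hX]
    congr 1
    by_cases hik : k = i
    · subst hik; simp
    · rw [pderiv_X_of_ne (Ne.symm hik)]; simp

lemma psi_Dop {n : ℕ} {R : Type*} [CommRing R] (B : Matrix (Fin n) (Fin n) R)
    (f : MvPolynomial (Fin n) R →ₗ[R] MvPolynomial (Fin n) R)
    (h1 : f 1 = 1) (hX : ∀ i g, f (X i * g) = Dop (-B) i (f g)) (i : Fin n)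
    (p : MvPolynomial (Fin n) R) : f (Dop B i p) = X i * f p := by
  rw [Dop, map_add, hX, map_sum]
  simp only [← MvPolynomial.smul_eq_C_mul, map_smul, Dop, psi_pderiv (-B) f h1 hX,
    Matrix.neg_apply, neg_smul, Finset.sum_neg_distrib]
  ring

lemma pderiv_supported {n : ℕ} {R : Type*} [CommRing R] (S : Set (Fin n)) (j : Fin n)
    (p : MvPolynomial (Fin n) R) (hp : p ∈ supported R S) : pderiv j p ∈ supported R S := by
  rw [supported] at hp ⊢
  induction hp using Algebra.adjoin_induction with
  | mem x hx =>
    obtain ⟨i, _, rfl⟩ := hx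
    by_cases hij : j = i
    · subst hij; simp
    · rw [pderiv_X_of_ne (Ne.symm hij)]; exact zero_mem _
  | algebraMap r => simp [MvPolynomial.algebraMap_eq]
  | add x y _ _ hx hy => rw [map_add]; exact add_mem hx hy
  | mul x y hx' hy' hx hy =>
    rw [Derivation.leibniz, smul_eq_mul, smul_eq_mul]
    exact add_mem (mul_mem hx' hy) (mul_mem hy' hx)

lemma Dop_supported {n : ℕ} {R : Type*} [CommRing R] (B : Matrix (Fin n) (Fin n) R)
    (S : Set (Fin n)) (i : Fin n) (hi : i ∈ S)
    (p : MvPolynomial (Fin n) R) (hp : p ∈ supported R S) : Dop B i p ∈ supported R S := by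
  refine add_mem (sum_mem fun j _ => ?_) (mul_mem (Algebra.subset_adjoin ⟨i, hi, rfl⟩) hp)
  rw [← MvPolynomial.smul_eq_C_mul]
  exact Subalgebra.smul_mem _ (pderiv_supported S j p hp) _

lemma surj_aux {n : ℕ} {R : Type*} [CommRing R] (B : Matrix (Fin n) (Fin n) R) (s : ℕ)
    (N : ℕ) : ∀ p : MvPolynomial (Fin n) R, p.totalDegree ≤ N →
      p ∈ (Subalgebra.toSubmodule (supported R {i : Fin n | s ≤ (i : ℕ)})) ⊔ DopSpan B s := by
  induction N using Nat.strong_induction_on with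
  | _ N ih =>
  intro p hp
  rw [p.as_sum]
  refine Submodule.sum_mem _ fun m hm => ?_
  have hmN : m.degree ≤ N := by
    refine le_trans ?_ hp
    exact le_totalDegree hm
  by_cases h : ∃ i : Fin n, (i : ℕ) < s ∧ m i ≠ 0
  · obtain ⟨i, his, hi⟩ := h
    set m' := m - Finsupp.single i 1 with hm'
    have hmm : m = Finsupp.single i 1 + m' := by
      ext k
      by_cases hk : i = k
      · subst hk; simp [hm']; omega
      · simp [hm', Finsupp.single_apply, hk]
    have hdeg : m.degree = 1 + m'.degree := by
      conv_lhs => rw [hmm]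
      simp
    set q := monomial m' (coeff m p) with hq
    have hmq : monomial m (coeff m p) = X i * q := by
      rw [hq, X, monomial_mul, ← hmm, one_mul]
    have : monomial m (coeff m p) = Dop B i q - ∑ j, C (B i j) * pderiv j q := by
      rw [hmq, Dop]; ring
    rw [this]
    refine sub_mem (Submodule.mem_sup_right (Submodule.subset_span ⟨i, q, his, rfl⟩)) ?_
    refine Submodule.sum_mem _ fun j _ => ?_
    rw [← MvPolynomial.smul_eq_C_mul]
    refine Submodule.smul_mem _ _ (ih (N - 1) (by omega) _ ?_)
    rw [hq, pderiv_monomial]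
    refine (totalDegree_monomial_le _ _).trans ?_
    have : (m' - Finsupp.single j 1).degree ≤ m'.degree := Finsupp.degree_mono tsub_le_self
    change (m' - Finsupp.single j 1).degree ≤ N - 1
    omega
  · push Not at h
    refine Submodule.mem_sup_left ?_
    change _ ∈ supported R {i : Fin n | s ≤ (i : ℕ)}
    rw [mem_supported]
    intro i hi
    have hi' := MvPolynomial.mem_vars i |>.mp hi
    obtain ⟨d, hd, hid⟩ := hi'
    have := support_monomial_subset hd
    rw [Finset.mem_singleton] at this
    subst this
    by_contra hlt
    exact (Finsupp.mem_support_iff.mp hid) (h i (by simpa using hlt))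

/-- Let `A` be an invertible symmetric `n×n` matrix over a
commutative ring `R` with inverse `B = (a^{ij})` and let
`D_i(g) = Σ_j a^{ij} ∂g/∂x_j + x_i·g`.  For every `0 ≤ s ≤ n` the composite of
the inclusion `R[x_{s+1},…,x_n] ↪ R[x_1,…,x_n]` with the quotient map
`R[x_1,…,x_n] → R[x_1,…,x_n]/(D_1(R[x]) + ⋯ + D_s(R[x]))` is an isomorphism of
`R`-modules; in particular for `s = n` the quotient is isomorphic to `R`,
generated by the class of the constant polynomial `1`. -/
theorem quotient_by_twisted_operators {R : Type*} [CommRing R] {n : ℕ}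
    (hn : 0 < n) (A B : Matrix (Fin n) (Fin n) R) (hsymm : A.IsSymm)
    (hAB : A * B = 1) (hBA : B * A = 1) :
    (∀ s : ℕ, s ≤ n →
      Function.Bijective
        ((DopSpan B s).mkQ.comp
          (MvPolynomial.rename
            (Subtype.val : {i : Fin n // s ≤ (i : ℕ)} → Fin n)).toLinearMap)) ∧
    (∀ y : MvPolynomial (Fin n) R ⧸ DopSpan B n,
      ∃ r : R, y = r • (DopSpan B n).mkQ 1) := by
  have hB : B.IsSymm := by
    have h : B.transpose * A = 1 := by
      have := congrArg Matrix.transpose hAB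
      rwa [Matrix.transpose_mul, hsymm.eq, Matrix.transpose_one] at this
    calc B.transpose = B.transpose * (A * B) := by rw [hAB, mul_one]
      _ = B := by rw [← mul_assoc, h, one_mul]
  have hBn : (-B).IsSymm := by
    rw [Matrix.IsSymm, Matrix.transpose_neg, hB.eq]
  have hrange : ∀ (s : ℕ) (q : MvPolynomial (Fin n) R),
      q ∈ supported R {i : Fin n | s ≤ (i : ℕ)} ↔ ∃ p, rename
        (Subtype.val : {i : Fin n // s ≤ (i : ℕ)} → Fin n) p = q := by
    intro s q
    rw [supported_eq_range_rename]
    exact Iff.rfl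
  have main : ∀ s : ℕ, s ≤ n →
      Function.Bijective
        ((DopSpan B s).mkQ.comp
          (MvPolynomial.rename
            (Subtype.val : {i : Fin n // s ≤ (i : ℕ)} → Fin n)).toLinearMap) := by
    intro s _
    constructor
    · rw [injective_iff_map_eq_zero]
      intro p hp
      obtain ⟨f, f1, fX⟩ := exists_psi (-B) hBn
      obtain ⟨g, g1, gX⟩ := exists_psi B hB
      set q := rename (Subtype.val : {i : Fin n // s ≤ (i : ℕ)} → Fin n) p with hq
      have hqD : q ∈ DopSpan B s := by
        simpa using hp
      have hgf : ∀ r, g (f r) = r := by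
        intro r
        refine mv_induct (f := g.comp f) (g := LinearMap.id) ?_ ?_ r
        · simp [f1, g1]
        · intro i r hr
          simp only [LinearMap.comp_apply, LinearMap.id_apply] at hr ⊢
          rw [fX, psi_Dop (-B) g g1 (by simpa using gX), hr]
      let π : MvPolynomial (Fin n) R →ₐ[R] MvPolynomial (Fin n) R :=
        aeval (fun i : Fin n => if s ≤ (i : ℕ) then X i else 0)
      have hπ0 : π (f q) = 0 := by
        have : DopSpan B s ≤ LinearMap.ker (π.toLinearMap.comp f) := by
          rw [DopSpan, Submodule.span_le]
          rintro _ ⟨i, r, hi, rfl⟩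
          simp only [SetLike.mem_coe, LinearMap.mem_ker, LinearMap.comp_apply,
            AlgHom.toLinearMap_apply]
          rw [psi_Dop B f f1 fX, map_mul]
          simp [π, Nat.not_le.mpr hi]
        exact this hqD
      have hπ : ∀ r ∈ supported R {i : Fin n | s ≤ (i : ℕ)}, π r = r := by
        intro r hr
        obtain ⟨t, rfl⟩ := (hrange s r).mp hr
        have : (π.comp (rename (Subtype.val : {i : Fin n // s ≤ (i : ℕ)} → Fin n))) =
            rename (Subtype.val : {i : Fin n // s ≤ (i : ℕ)} → Fin n) := by
          apply MvPolynomial.algHom_ext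
          intro i
          simp [π, i.2]
        exact congrArg (fun h => h t) this
      have hfS : ∀ t : MvPolynomial {i : Fin n // s ≤ (i : ℕ)} R,
          f (rename Subtype.val t) ∈ supported R {i : Fin n | s ≤ (i : ℕ)} := by
        intro t
        induction t using MvPolynomial.induction_on with
        | C a =>
          have : rename (Subtype.val : {i : Fin n // s ≤ (i : ℕ)} → Fin n) (C a : MvPolynomial _ R)
            = a • 1 := by rw [rename_C, MvPolynomial.smul_eq_C_mul, mul_one]
          rw [this, map_smul, f1]
          exact Subalgebra.smul_mem _ (one_mem _) _
        | add p q hp hq => rw [map_add, map_add]; exact add_mem hp hq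
        | mul_X p i hp =>
          rw [mul_comm, map_mul, rename_X, fX]
          exact Dop_supported _ _ _ i.2 _ hp
      have hfq : f q = 0 := by rw [← hπ _ (hfS p)]; exact hπ0
      have hq0 : q = 0 := by rw [← hgf q, hfq, map_zero]
      exact rename_injective _ Subtype.val_injective (by rw [← hq, hq0, map_zero])
    · intro y
      obtain ⟨p, rfl⟩ := Submodule.mkQ_surjective _ y
      obtain ⟨q, hq, d, hd, rfl⟩ := Submodule.mem_sup.mp (surj_aux B s _ p le_rfl)
      obtain ⟨t, rfl⟩ := (hrange s q).mp hq
      refine ⟨t, ?_⟩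
      rw [map_add, LinearMap.comp_apply]
      have : (DopSpan B s).mkQ d = 0 := by simpa using hd
      rw [this, add_zero]
      rfl
  refine ⟨main, fun y => ?_⟩
  obtain ⟨t, rfl⟩ := (main n le_rfl).2 y
  haveI : IsEmpty {i : Fin n // n ≤ (i : ℕ)} := ⟨fun i => absurd i.1.2 (Nat.not_lt.mpr i.2)⟩
  obtain ⟨r, rfl⟩ := C_surjective {i : Fin n // n ≤ (i : ℕ)} t
  refine ⟨r, ?_⟩
  rw [← map_smul, MvPolynomial.smul_eq_C_mul, mul_one, LinearMap.comp_apply]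
  simp

end
end

section
/- Let R be a commutative ring, n a positive integer, and A an invertible symmetric n×n matrix over R. Let f = ½xᵗAx, so that df denotes the closed polynomial 1-form Σ_{a,b} A_{ab} x_b dx_a. Then the twisted de Rham cohomology H^k_f(R), i.e., the cohomology of the complex of polynomial differential forms on R^n with differential d_f ω = dω + df∧ω, is concentrated in degree n: H^k_f(R) = 0 for k ≠ n, and H^n_f(R) is isomorphic to R, generated by the class of the form dx_1∧⋯∧dx_n. -/
open MvPolynomial

noncomputable section

/-- Polynomial differential forms on `K^n`: a form assigns to each subset
`s ⊆ {1,…,n}` (the indices of `dx_{i_1} ∧ ⋯ ∧ dx_{i_k}` with `i_1 < ⋯ < i_k`)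
a polynomial coefficient. -/
abbrev Form (n : ℕ) (K : Type*) [CommRing K] :=
  Finset (Fin n) → MvPolynomial (Fin n) K

/-- The sign `(-1)^{#{j ∈ s | j < i}}`. -/
def sgn {n : ℕ} (K : Type*) [CommRing K] (s : Finset (Fin n)) (i : Fin n) :
    MvPolynomial (Fin n) K :=
  (-1) ^ (s.filter (fun j => j < i)).card

/-- The twisted de Rham differential `d_α ω = dω + α ∧ ω` associated to a
(closed) polynomial 1-form `α = Σ_i α_i dx_i`. -/
def dTwist {n : ℕ} {K : Type*} [CommRing K]
    (α : Fin n → MvPolynomial (Fin n) K) :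
    Form n K →ₗ[K] Form n K where
  toFun ω := fun s => ∑ i ∈ s,
    sgn K s i * (pderiv i (ω (s.erase i)) + α i * ω (s.erase i))
  map_add' ω₁ ω₂ := by
    funext s
    simp only [Pi.add_apply]
    rw [← Finset.sum_add_distrib]
    refine Finset.sum_congr rfl fun i _ => ?_
    simp only [map_add]
    ring
  map_smul' c ω := by
    funext s
    simp only [Pi.smul_apply, map_smul, RingHom.id_apply, Finset.smul_sum]
    refine Finset.sum_congr rfl fun i _ => ?_
    simp [mul_add, mul_smul_comm, smul_add, mul_assoc]

/-- The (untwisted) polynomial de Rham differential. -/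
abbrev dRham (n : ℕ) (K : Type*) [CommRing K] : Form n K →ₗ[K] Form n K :=
  dTwist (fun _ => 0)

/-- Multiplication of a form by a 1-form `α`, `ω ↦ α ∧ ω`. -/
def wedge1 {n : ℕ} {K : Type*} [CommRing K]
    (α : Fin n → MvPolynomial (Fin n) K) :
    Form n K →ₗ[K] Form n K where
  toFun ω := fun s => ∑ i ∈ s, sgn K s i * (α i * ω (s.erase i))
  map_add' ω₁ ω₂ := by
    funext s
    simp only [Pi.add_apply]
    rw [← Finset.sum_add_distrib]
    refine Finset.sum_congr rfl fun i _ => ?_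
    ring
  map_smul' c ω := by
    funext s
    simp only [Pi.smul_apply, RingHom.id_apply, Finset.smul_sum]
    refine Finset.sum_congr rfl fun i _ => ?_
    simp [mul_smul_comm]

/-- Forms of pure degree `k`: those supported on index sets of cardinality `k`. -/
def formDeg (n : ℕ) (K : Type*) [CommRing K] (k : ℕ) : Submodule K (Form n K) where
  carrier := {ω | ∀ s : Finset (Fin n), s.card ≠ k → ω s = 0}
  add_mem' := by
    intro a b ha hb s hs
    simp [Pi.add_apply, ha s hs, hb s hs]
  zero_mem' := fun s _ => rfl
  smul_mem' := by
    intro c a ha s hs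
    simp [Pi.smul_apply, ha s hs]

/-- Degree-`k` cocycles of the twisted de Rham complex. -/
def cocycles {n : ℕ} {K : Type*} [CommRing K]
    (α : Fin n → MvPolynomial (Fin n) K) (k : ℕ) : Submodule K (Form n K) :=
  formDeg n K k ⊓ LinearMap.ker (dTwist α)

/-- Degree-`k` coboundaries of the twisted de Rham complex. -/
def cobounds {n : ℕ} {K : Type*} [CommRing K]
    (α : Fin n → MvPolynomial (Fin n) K) (k : ℕ) : Submodule K (Form n K) :=
  Submodule.map (dTwist α) (formDeg n K (k - 1))

/-- The degree-`k` twisted de Rham cohomology of the 1-form `α`. -/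
abbrev Htwist {n : ℕ} {K : Type*} [CommRing K]
    (α : Fin n → MvPolynomial (Fin n) K) (k : ℕ) :=
  (cocycles α k) ⧸ (Submodule.comap (cocycles α k).subtype (cobounds α k))

/-- The differential `df` of a polynomial, as the family of coefficients of the
1-form `Σ_i (∂f/∂x_i) dx_i`. -/
def grad {n : ℕ} {K : Type*} [CommRing K] (f : MvPolynomial (Fin n) K) :
    Fin n → MvPolynomial (Fin n) K :=
  fun i => pderiv i f

/-- The twisted de Rham cohomology `H^k_f(K)` of a polynomial `f`. -/
abbrev Hf {n : ℕ} {K : Type*} [CommRing K] (f : MvPolynomial (Fin n) K) (k : ℕ) :=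
  Htwist (grad f) k

/-- The top form `dx_1 ∧ ⋯ ∧ dx_n`. -/
def topForm (n : ℕ) (K : Type*) [CommRing K] : Form n K :=
  fun s => if s = Finset.univ then 1 else 0


/-- The 1-form `df = Σ_{a,b} A_{ab} x_b dx_a` associated to the quadratic
function `f = ½xᵗAx`, given by its coefficient family `a ↦ Σ_b A_{ab} x_b`
(defined even when `2` is not invertible). -/
def quadDf {n : ℕ} {R : Type*} [CommRing R] (A : Matrix (Fin n) (Fin n) R) :
    Fin n → MvPolynomial (Fin n) R :=
  fun a => ∑ b, C (A a b) * X b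


section Helpers

variable {R : Type*} [CommRing R] {n : ℕ}

/-- A commuting family of operators admits an evaluation map at `1`. -/
lemma exists_theta (D : Fin n → Module.End R (MvPolynomial (Fin n) R))
    (hD : ∀ i j, D i * D j = D j * D i) :
    ∃ Θ : MvPolynomial (Fin n) R →ₗ[R] MvPolynomial (Fin n) R,
      Θ 1 = 1 ∧ ∀ i p, Θ (X i * p) = D i (Θ p) := by
  have hcomm : ∀ a ∈ Set.range D, ∀ b ∈ Set.range D, a * b = b * a := by
    rintro _ ⟨i, rfl⟩ _ ⟨j, rfl⟩
    exact hD i j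
  letI : CommRing (Algebra.adjoin R (Set.range D)) := Algebra.adjoinCommRingOfComm R hcomm
  let φ : MvPolynomial (Fin n) R →ₐ[R] Algebra.adjoin R (Set.range D) :=
    aeval (fun i => ⟨D i, Algebra.subset_adjoin ⟨i, rfl⟩⟩)
  refine ⟨(LinearMap.applyₗ (1 : MvPolynomial (Fin n) R)).comp
    ((Algebra.adjoin R (Set.range D)).val.toLinearMap.comp φ.toLinearMap), ?_, ?_⟩
  · have : φ 1 = 1 := map_one φ
    simp [this]
  · intro i p
    have : φ (X i * p) = ⟨D i, Algebra.subset_adjoin ⟨i, rfl⟩⟩ * φ p := by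
      rw [map_mul]; simp [φ]
    simp [this]

/-- The filtration by degree. -/
def filt (n : ℕ) (R : Type*) [CommRing R] (d : ℕ) : Submodule R (MvPolynomial (Fin n) R) where
  carrier := {p | ∀ m : Fin n →₀ ℕ, d ≤ m.degree → coeff m p = 0}
  add_mem' := by
    intro a b ha hb m hm
    simp [ha m hm, hb m hm]
  zero_mem' := by intro m _; simp
  smul_mem' := by
    intro c a ha m hm
    simp [ha m hm]

lemma filt_mono {d e : ℕ} (h : d ≤ e) : filt n R d ≤ filt n R e :=
  fun _ hp m hm => hp m (h.trans hm)

lemma filt_X {d : ℕ} {p : MvPolynomial (Fin n) R} (i : Fin n) (hp : p ∈ filt n R d) :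
    X i * p ∈ filt n R (d + 1) := by
  intro m hm
  rw [coeff_X_mul']
  split_ifs with h
  · apply hp
    have h1 : Finsupp.single i 1 ≤ m := by
      rw [Finsupp.single_le_iff]
      have := Finsupp.mem_support_iff.1 h
      omega
    have h2 : m = (m - Finsupp.single i 1) + Finsupp.single i 1 := (tsub_add_cancel_of_le h1).symm
    rw [h2, map_add, Finsupp.degree_single] at hm
    omega
  · rfl

lemma filt_pderiv {d : ℕ} {p : MvPolynomial (Fin n) R} (i : Fin n) (hp : p ∈ filt n R (d + 1)) :
    pderiv i p ∈ filt n R d := by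
  intro m hm
  rw [coeff_pderiv, hp, zero_mul]
  rw [map_add, Finsupp.degree_single]
  omega

lemma filt_exists (p : MvPolynomial (Fin n) R) : ∃ d, p ∈ filt n R d := by
  refine ⟨p.totalDegree + 1, fun m hm => ?_⟩
  apply coeff_eq_zero_of_totalDegree_lt
  have : m.degree = ∑ i ∈ m.support, m i := rfl
  omega

/-- The constant coefficient derivation `Σ_j A_{ij} ∂_j`. -/
def del (A : Matrix (Fin n) (Fin n) R) (i : Fin n) :
    Derivation R (MvPolynomial (Fin n) R) (MvPolynomial (Fin n) R) :=
  ∑ j, A i j • pderiv j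

lemma del_apply (A : Matrix (Fin n) (Fin n) R) (i : Fin n) (p : MvPolynomial (Fin n) R) :
    del A i p = ∑ j, A i j • pderiv j p := by
  have h := congrFun (map_sum (Derivation.coeFnAddMonoidHom (R := R)
    (A := MvPolynomial (Fin n) R) (M := MvPolynomial (Fin n) R))
    (fun j => A i j • pderiv j) Finset.univ) p
  rw [Finset.sum_apply] at h
  exact h

lemma del_X (A : Matrix (Fin n) (Fin n) R) (i j : Fin n) :
    del A i (X j) = C (A i j) := by
  rw [del_apply, Finset.sum_eq_single j]
  · simp [smul_eq_C_mul]
  · intro b _ hb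
    rw [pderiv_X_of_ne hb.symm, smul_zero]
  · simp

lemma filt_del (A : Matrix (Fin n) (Fin n) R) {d : ℕ} {p : MvPolynomial (Fin n) R} (i : Fin n)
    (hp : p ∈ filt n R (d + 1)) : del A i p ∈ filt n R d := by
  rw [del_apply]
  exact Submodule.sum_mem _ fun j _ => Submodule.smul_mem _ _ (filt_pderiv j hp)

lemma del_comm (A : Matrix (Fin n) (Fin n) R) (i j : Fin n) (p : MvPolynomial (Fin n) R) :
    del A i (del A j p) = del A j (del A i p) := by
  have h : ⁅del A i, del A j⁆ = 0 := by
    apply MvPolynomial.derivation_ext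
    intro k
    rw [Derivation.commutator_apply]
    simp [del_X]
  have := congrArg (fun D => D p) h
  simp only [Derivation.commutator_apply, Derivation.coe_zero, Pi.zero_apply] at this
  exact sub_eq_zero.1 this

/-- An abstract triangularity criterion for bijectivity. -/
lemma bij_of_filt (T : MvPolynomial (Fin n) R →ₗ[R] MvPolynomial (Fin n) R)
    (hT : ∀ d p, p ∈ filt n R (d + 1) → T p - p ∈ filt n R d) : Function.Bijective T := by
  have h0 : ∀ p, p ∈ filt n R 0 → p = 0 := by
    intro p hp
    ext m
    simpa using hp m (Nat.zero_le _)
  constructor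
  · rw [injective_iff_map_eq_zero]
    intro p hp
    obtain ⟨d, hd⟩ := filt_exists p
    apply h0
    induction d with
    | zero => exact hd
    | succ d ih =>
      apply ih
      have := hT d p hd
      rw [hp, zero_sub] at this
      simpa using this
  · intro q
    obtain ⟨d, hd⟩ := filt_exists q
    induction d generalizing q with
    | zero => exact ⟨0, by rw [h0 q hd, map_zero]⟩
    | succ d ih =>
      obtain ⟨p, hp⟩ := ih _ (hT d q hd)
      exact ⟨q - p, by rw [map_sub, hp]; abel⟩

/-- The operators `x_i + Σ_j A_{ij} ∂_j`. -/
def opD (A : Matrix (Fin n) (Fin n) R) (i : Fin n) : Module.End R (MvPolynomial (Fin n) R) :=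
  LinearMap.mulLeft R (X i) + (del A i : MvPolynomial (Fin n) R →ₗ[R] MvPolynomial (Fin n) R)

lemma opD_apply (A : Matrix (Fin n) (Fin n) R) (i : Fin n) (p : MvPolynomial (Fin n) R) :
    opD A i p = X i * p + del A i p := by simp [opD]

lemma exists_theta' (A : Matrix (Fin n) (Fin n) R) (hA : A.IsSymm) :
    ∃ Θ : MvPolynomial (Fin n) R →ₗ[R] MvPolynomial (Fin n) R,
      Function.Bijective Θ ∧ Θ 1 = 1 ∧ ∀ i p, Θ (X i * p) = X i * Θ p + del A i (Θ p) := by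
  obtain ⟨Θ, h1, hX⟩ := exists_theta (opD A) (by
    intro i j
    refine LinearMap.ext fun p => ?_
    simp only [Module.End.mul_apply, opD_apply, map_add, Derivation.leibniz, del_X, del_comm A i j,
      smul_eq_mul, hA.apply i j]
    ring)
  simp only [opD_apply] at hX
  refine ⟨Θ, bij_of_filt Θ ?_, h1, hX⟩
  have hmon : ∀ d (m : Fin n →₀ ℕ), m.degree = d →
      Θ (monomial m 1) - monomial m 1 ∈ filt n R d := by
    intro d
    induction d with
    | zero =>
      intro m hm
      have : m = 0 := (Finsupp.degree_eq_zero_iff m).1 hm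
      subst this
      have : (monomial 0 1 : MvPolynomial (Fin n) R) = 1 := rfl
      rw [this, h1, sub_self]
      exact zero_mem _
    | succ d ih =>
      intro m hm
      have hne : m ≠ 0 := by rintro rfl; simp at hm
      obtain ⟨i, hi⟩ := Finsupp.ne_iff.1 hne
      have hle : Finsupp.single i 1 ≤ m := by
        rw [Finsupp.single_le_iff]
        simp at hi
        omega
      obtain ⟨m', rfl⟩ := exists_add_of_le hle
      rw [map_add, Finsupp.degree_single] at hm
      have hmon : (monomial (Finsupp.single i 1 + m') 1 : MvPolynomial (Fin n) R)
          = X i * monomial m' 1 := by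
        rw [X, monomial_mul, one_mul]
      have hm' := ih m' (by omega)
      have hmem : (monomial m' 1 : MvPolynomial (Fin n) R) ∈ filt n R (d + 1) := by
        intro u hu
        rw [coeff_monomial, if_neg]
        rintro rfl
        omega
      rw [hmon, hX]
      have e : X i * Θ (monomial m' 1) + del A i (Θ (monomial m' 1)) - X i * monomial m' 1
          = X i * (Θ (monomial m' 1) - monomial m' 1) + del A i (Θ (monomial m' 1)) := by ring
      rw [e]
      refine add_mem (filt_X i hm') (filt_mono (Nat.le_succ d) (filt_del A i ?_))
      have := add_mem (filt_mono (Nat.le_succ d) hm') hmem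
      simpa using this
  intro d p hp
  have e : Θ p - p = ∑ m ∈ p.support, coeff m p • (Θ (monomial m 1) - monomial m 1) := by
    conv_lhs => rw [p.as_sum]
    rw [map_sum, ← Finset.sum_sub_distrib]
    refine Finset.sum_congr rfl fun m _ => ?_
    have : monomial m (coeff m p) = coeff m p • (monomial m 1 : MvPolynomial (Fin n) R) := by
      rw [smul_monomial, smul_eq_mul, mul_one]
    rw [this, map_smul, smul_sub]
  rw [e]
  refine Submodule.sum_mem _ fun m hm => Submodule.smul_mem _ _ ?_
  refine filt_mono ?_ (hmon _ m rfl)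
  by_contra hlt
  exact (mem_support_iff.1 hm) (hp m (by omega))

lemma pderiv_quadDf (A : Matrix (Fin n) (Fin n) R) (hA : A.IsSymm) (i j : Fin n) :
    pderiv i (quadDf A j) = C (A i j) := by
  rw [quadDf, map_sum, Finset.sum_eq_single i]
  · simp [Derivation.leibniz, hA.apply i j]
  · intro b _ hb
    simp [Derivation.leibniz, pderiv_X_of_ne hb]
  · simp

lemma pderiv_aeval (A : Matrix (Fin n) (Fin n) R) (hA : A.IsSymm) (i : Fin n)
    (p : MvPolynomial (Fin n) R) :
    pderiv i (aeval (quadDf A) p) = aeval (quadDf A) (del A i p) := by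
  induction p using MvPolynomial.induction_on with
  | C a =>
    have h1 : del A i (C a) = 0 := by rw [del_apply]; simp
    rw [h1]
    simp [algebraMap_eq]
  | add p q hp hq => simp only [map_add, hp, hq]
  | mul_X p j hp =>
    simp only [map_mul, map_add, Derivation.leibniz, hp, smul_eq_mul, aeval_X,
      pderiv_quadDf A hA, del_X, aeval_C, algebraMap_eq]

lemma aeval_quadDf_comp (A B : Matrix (Fin n) (Fin n) R) (h : B * A = 1)
    (p : MvPolynomial (Fin n) R) :
    aeval (quadDf A) (aeval (quadDf B) p) = p := by
  have : (aeval (quadDf A)).comp (aeval (quadDf B)) =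
      AlgHom.id R (MvPolynomial (Fin n) R) := by
    apply MvPolynomial.algHom_ext
    intro j
    simp only [AlgHom.comp_apply, aeval_X, AlgHom.id_apply]
    simp only [quadDf, map_sum, map_mul, aeval_C, aeval_X, algebraMap_eq, Finset.mul_sum]
    rw [Finset.sum_comm]
    have : ∀ c, ∑ b, C (B j b) * (C (A b c) * X c)
        = C ((B * A) j c) * (X c : MvPolynomial (Fin n) R) := by
      intro c
      rw [Matrix.mul_apply, map_sum, Finset.sum_mul]
      simp [mul_assoc]
    simp only [this, h]
    rw [Finset.sum_eq_single j]
    · simp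
    · intro b _ hb
      simp [Matrix.one_apply_ne hb.symm]
    · simp
  exact congrArg (fun f => f p) this

/-- The linear automorphism intertwining `x_i` and `∂_i + α_i`. -/
lemma exists_equiv (A B : Matrix (Fin n) (Fin n) R) (hA : A.IsSymm)
    (hAB : A * B = 1) (hBA : B * A = 1) :
    ∃ Θ : MvPolynomial (Fin n) R ≃ₗ[R] MvPolynomial (Fin n) R,
      Θ 1 = 1 ∧ ∀ i p, Θ (X i * p) = pderiv i (Θ p) + quadDf A i * Θ p := by
  obtain ⟨T, hb, h1, hX⟩ := exists_theta' A hA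
  have hΨ : Function.Bijective (aeval (R := R) (quadDf A)).toLinearMap := by
    refine Function.bijective_iff_has_inverse.2 ⟨aeval (quadDf B), ?_, ?_⟩
    · intro p; exact aeval_quadDf_comp B A hAB p
    · intro p; exact aeval_quadDf_comp A B hBA p
  refine ⟨(LinearEquiv.ofBijective T hb).trans (LinearEquiv.ofBijective _ hΨ), ?_, ?_⟩
  · simp [h1]
  · intro i p
    change aeval (quadDf A) (T (X i * p)) =
      pderiv i (aeval (quadDf A) (T p)) + quadDf A i * aeval (quadDf A) (T p)
    rw [hX, pderiv_aeval A hA, map_add, map_mul, aeval_X, add_comm]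

/-! ### The Koszul complex of the variables -/

/-- The sign as an element of the base ring. -/
lemma sgn_mul_eq (s : Finset (Fin n)) (i : Fin n) (p : MvPolynomial (Fin n) R) :
    sgn R s i * p = ((-1 : R) ^ (s.filter (fun j => j < i)).card) • p := by
  rw [sgn, smul_eq_C_mul]
  simp

lemma map_sgn (T : MvPolynomial (Fin n) R →ₗ[R] MvPolynomial (Fin n) R)
    (s : Finset (Fin n)) (i : Fin n) (p : MvPolynomial (Fin n) R) :
    T (sgn R s i * p) = sgn R s i * T p := by
  simp only [sgn_mul_eq, map_smul]

lemma sgn_sq (s : Finset (Fin n)) (i : Fin n) : sgn R s i * sgn R s i = 1 := by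
  rw [sgn, ← mul_pow]; simp

lemma sgn_insert (s : Finset (Fin n)) (i j : Fin n) (hi : i ∉ s) :
    sgn R (insert i s) j = sgn R s j * (if i < j then -1 else 1) := by
  rw [sgn, sgn, Finset.filter_insert]
  split_ifs with h
  · rw [Finset.card_insert_of_notMem (by simp [hi]), pow_succ]
  · simp

lemma sgn_swap (s : Finset (Fin n)) (i j : Fin n) (hi : i ∉ s) (hj : j ∈ s) :
    sgn R s j * sgn R (insert i (s.erase j)) i = - (sgn R (insert i s) i * sgn R (insert i s) j) := by
  have hne : i ≠ j := by rintro rfl; exact hi hj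
  have h1 : sgn R s i = sgn R (s.erase j) i * (if j < i then -1 else 1) := by
    conv_lhs => rw [← Finset.insert_erase hj]
    exact sgn_insert _ _ _ (by simp)
  rw [sgn_insert _ _ _ hi, sgn_insert _ _ _ hi, sgn_insert _ _ _ (by simp [hi]), h1]
  rcases lt_or_gt_of_ne hne with h | h
  · simp [h, h.not_gt, mul_comm]
  · simp [h, h.not_gt, mul_comm]

/-- Division by `x_i`, dropping terms without `x_i`. -/
def qdiv (i : Fin n) : MvPolynomial (Fin n) R →ₗ[R] MvPolynomial (Fin n) R where
  toFun p := p.divMonomial (Finsupp.single i 1)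
  map_add' p q := add_divMonomial _ _ _
  map_smul' c p := by
    ext m
    simp [coeff_divMonomial]

lemma coeff_qdiv (i : Fin n) (p : MvPolynomial (Fin n) R) (m : Fin n →₀ ℕ) :
    coeff m (qdiv i p) = coeff (Finsupp.single i 1 + m) p := coeff_divMonomial _ _ _

lemma qdiv_X (i : Fin n) (p : MvPolynomial (Fin n) R) : qdiv i (X i * p) = p :=
  X_mul_divMonomial i p

lemma qdiv_X_ne {i j : Fin n} (h : j ≠ i) (p : MvPolynomial (Fin n) R) :
    qdiv i (X j * p) = X j * qdiv i p := by
  ext m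
  rw [coeff_qdiv, coeff_X_mul', coeff_X_mul', coeff_qdiv]
  have h1 : j ∈ (Finsupp.single i 1 + m).support ↔ j ∈ m.support := by
    simp [Finsupp.single_apply, h.symm]
  simp only [h1]
  split_ifs with h2
  · congr 1
    apply add_tsub_assoc_of_le
    rw [Finsupp.single_le_iff]
    have := Finsupp.mem_support_iff.1 h2
    omega
  · rfl

/-- Setting `x_i = 0`. -/
def eps (i : Fin n) : MvPolynomial (Fin n) R →ₗ[R] MvPolynomial (Fin n) R :=
  LinearMap.id - (LinearMap.mulLeft R (X i)).comp (qdiv i)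

lemma eps_apply (i : Fin n) (p : MvPolynomial (Fin n) R) : eps i p = p - X i * qdiv i p := rfl

lemma eps_X (i : Fin n) (p : MvPolynomial (Fin n) R) : eps i (X i * p) = 0 := by
  rw [eps_apply, qdiv_X, sub_self]

lemma eps_X_ne {i j : Fin n} (h : j ≠ i) (p : MvPolynomial (Fin n) R) :
    eps i (X j * p) = X j * eps i p := by
  rw [eps_apply, eps_apply, qdiv_X_ne h]; ring

lemma coeff_eps (i : Fin n) (p : MvPolynomial (Fin n) R) (m : Fin n →₀ ℕ) :
    coeff m (eps i p) = if m i = 0 then coeff m p else 0 := by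
  rw [eps_apply, coeff_sub, coeff_X_mul', coeff_qdiv]
  by_cases h : m i = 0
  · simp [h]
  · rw [if_pos (by simpa using h), if_neg h, add_tsub_cancel_of_le, sub_self]
    rw [Finsupp.single_le_iff]; omega

/-- The homotopy. -/
def hom (i : Fin n) (ω : Form n R) : Form n R := fun s =>
  if i ∈ s then 0 else sgn R (insert i s) i * qdiv i (ω (insert i s))

/-- The projection. -/
def proj (i : Fin n) (ω : Form n R) : Form n R := fun s => if i ∈ s then eps i (ω s) else 0

lemma wedge1_apply (α : Fin n → MvPolynomial (Fin n) R) (ω : Form n R) (s : Finset (Fin n)) :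
    wedge1 α ω s = ∑ i ∈ s, sgn R s i * (α i * ω (s.erase i)) := rfl

lemma homotopy (i : Fin n) (ω : Form n R) (hω : wedge1 X ω = 0) :
    ω = proj i ω + wedge1 X (hom i ω) := by
  funext s
  rw [Pi.add_apply, wedge1_apply]
  by_cases hi : i ∈ s
  · rw [Finset.sum_eq_single_of_mem i hi]
    · simp only [proj, hom, if_pos hi, Finset.notMem_erase, if_false, Finset.insert_erase hi,
        eps_apply]
      linear_combination (-(X i * qdiv i (ω s))) * sgn_sq (R := R) s i
    · intro j hj hji
      simp [hom, hi, hji.symm]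
  · have h := congrFun hω (insert i s)
    rw [wedge1_apply, Finset.sum_insert hi, Finset.erase_insert hi] at h
    have h2 := congrArg (qdiv i) h
    simp only [map_add, map_sum, map_sgn, qdiv_X, Pi.zero_apply, map_zero] at h2
    have h3 : ∑ j ∈ s, sgn R s j * (X j * hom i ω (s.erase j)) =
        - (sgn R (insert i s) i * ∑ j ∈ s, sgn R (insert i s) j *
          qdiv i (X j * ω ((insert i s).erase j))) := by
      rw [Finset.mul_sum, ← Finset.sum_neg_distrib]
      refine Finset.sum_congr rfl fun j hj => ?_
      have hne : j ≠ i := by rintro rfl; exact hi hj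
      have h4 : i ∉ s.erase j := by simp [hi]
      rw [qdiv_X_ne hne, Finset.erase_insert_of_ne hne.symm, hom, if_neg h4]
      linear_combination (X j * qdiv i (ω (insert i (s.erase j)))) *
        sgn_swap (R := R) s i j hi hj
    rw [h3, proj, if_neg hi]
    linear_combination (-(ω s)) * sgn_sq (R := R) (insert i s) i + sgn R (insert i s) i * h2

lemma proj_cocycle (i : Fin n) (ω : Form n R) (hω : wedge1 X ω = 0) :
    wedge1 X (proj i ω) = 0 := by
  funext s
  rw [wedge1_apply, Pi.zero_apply]
  by_cases hi : i ∈ s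
  · have h := congrArg (eps i) (congrFun hω s)
    rw [wedge1_apply] at h
    simp only [map_sum, map_sgn, Pi.zero_apply, map_zero] at h
    rw [← h]
    refine Finset.sum_congr rfl fun j hj => ?_
    by_cases hji : j = i
    · subst hji
      simp [proj, eps_X]
    · rw [eps_X_ne hji, proj, if_pos (by simp [hi, Ne.symm hji])]
  · refine Finset.sum_eq_zero fun j hj => ?_
    simp [proj, hi]

lemma hom_deg (i : Fin n) (k : ℕ) (ω : Form n R) (hω : ω ∈ formDeg n R k) :
    hom i ω ∈ formDeg n R (k - 1) := by
  intro s hs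
  rw [hom]
  split_ifs with h
  · rfl
  · rw [hω, map_zero, mul_zero]
    rw [Finset.card_insert_of_notMem h]
    omega

lemma proj_deg (i : Fin n) (k : ℕ) (ω : Form n R) (hω : ω ∈ formDeg n R k) :
    proj i ω ∈ formDeg n R k := by
  intro s hs
  rw [proj, hω s hs, map_zero, ite_self]

lemma reduce (k : ℕ) (T : Finset (Fin n)) (ω : Form n R) (hk : ω ∈ formDeg n R k)
    (hω : wedge1 X ω = 0) :
    ∃ η ∈ formDeg n R (k - 1), ∃ ω' ∈ formDeg n R k, wedge1 X ω' = 0 ∧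
      ω = ω' + wedge1 X η ∧
      ∀ i ∈ T, ∀ s m, (i ∉ s ∨ m i ≠ 0) → coeff m (ω' s) = 0 := by
  induction T using Finset.induction_on with
  | empty => exact ⟨0, zero_mem _, ω, hk, hω, by simp, by simp⟩
  | insert a T ha ih =>
    obtain ⟨η, hη, ω', hk', hω', e, hT⟩ := ih
    refine ⟨η + hom a ω', add_mem hη (hom_deg a k ω' hk'), proj a ω', proj_deg a k ω' hk',
      proj_cocycle a ω' hω', ?_, ?_⟩
    · rw [e, map_add]
      conv_lhs => rw [homotopy a ω' hω']
      abel
    · intro i hi s m hm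
      rw [proj]
      split_ifs with has
      · rw [coeff_eps]
        split_ifs with hma
        · rcases Finset.mem_insert.1 hi with rfl | hi
          · exact absurd hm (by simp [has, hma])
          · exact hT i hi s m hm
        · rfl
      · simp

lemma koszul (k : ℕ) (ω : Form n R) (hk : ω ∈ formDeg n R k)
    (hω : wedge1 X ω = 0) :
    ∃ η ∈ formDeg n R (k - 1), ∃ c : R, c • topForm n R ∈ formDeg n R k ∧
      ω = c • topForm n R + wedge1 X η := by
  obtain ⟨η, hη, ω', hk', -, e, hT⟩ := reduce k Finset.univ ω hk hω
  have : ω' = coeff 0 (ω' Finset.univ) • topForm n R := by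
    funext s
    rw [Pi.smul_apply, topForm]
    split_ifs with hs
    · subst hs
      ext m
      by_cases hm : m = 0
      · subst hm; simp
      · obtain ⟨i, hi⟩ := Finsupp.ne_iff.1 hm
        rw [hT i (Finset.mem_univ _) _ _ (Or.inr hi), coeff_smul, coeff_one,
          if_neg (Ne.symm hm), smul_zero]
    · obtain ⟨i, hi⟩ : ∃ i, i ∉ s := by
        by_contra hcon
        push Not at hcon
        exact hs (Finset.eq_univ_of_forall hcon)
      ext m
      rw [hT i (Finset.mem_univ _) _ _ (Or.inl hi)]
      simp
  refine ⟨η, hη, _, this ▸ hk', ?_⟩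
  rw [← this]; exact e

lemma dTwist_apply (α : Fin n → MvPolynomial (Fin n) R) (ω : Form n R) (s : Finset (Fin n)) :
    dTwist α ω s = ∑ i ∈ s,
      sgn R s i * (pderiv i (ω (s.erase i)) + α i * ω (s.erase i)) := rfl

lemma dTwist_theta (α : Fin n → MvPolynomial (Fin n) R)
    (Θ : MvPolynomial (Fin n) R ≃ₗ[R] MvPolynomial (Fin n) R)
    (hΘ : ∀ i p, Θ (X i * p) = pderiv i (Θ p) + α i * Θ p) (ω : Form n R) :
    dTwist α (fun s => Θ (ω s)) = fun s => Θ (wedge1 X ω s) := by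
  funext s
  rw [dTwist_apply, wedge1_apply, map_sum]
  refine Finset.sum_congr rfl fun i _ => ?_
  have := map_sgn Θ.toLinearMap s i (X i * ω (s.erase i))
  simp only [LinearEquiv.coe_coe] at this
  rw [this, hΘ]

lemma twisted (α : Fin n → MvPolynomial (Fin n) R)
    (Θ : MvPolynomial (Fin n) R ≃ₗ[R] MvPolynomial (Fin n) R) (h1 : Θ 1 = 1)
    (hΘ : ∀ i p, Θ (X i * p) = pderiv i (Θ p) + α i * Θ p) (k : ℕ) (ω : Form n R)
    (hω : ω ∈ cocycles α k) :
    ∃ η ∈ formDeg n R (k - 1), ∃ c : R, c • topForm n R ∈ formDeg n R k ∧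
      ω = c • topForm n R + dTwist α η := by
  obtain ⟨hk, hd⟩ := hω
  have hd : dTwist α ω = 0 := hd
  have e : ω = fun s => Θ (Θ.symm (ω s)) := by funext s; simp
  obtain ⟨η, hη, c, hc, h⟩ := koszul k (fun s => Θ.symm (ω s))
    (by intro s hs; simp [hk s hs]) (by
      funext s
      have := congrFun (dTwist_theta α Θ hΘ (fun s => Θ.symm (ω s))) s
      rw [← e, hd] at this
      exact Θ.injective (by rw [← this]; simp))
  refine ⟨fun s => Θ (η s), by intro s hs; simp [hη s hs], c, hc, ?_⟩
  rw [dTwist_theta α Θ hΘ]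
  funext s
  have := congrArg Θ (congrFun h s)
  simp only [LinearEquiv.apply_symm_apply, Pi.add_apply, map_add, Pi.smul_apply, map_smul] at this
  rw [this, Pi.add_apply, Pi.smul_apply, topForm]
  split_ifs <;> simp [h1]

/-- The functional identifying the top cohomology with `R`. -/
def topFun (Θ : MvPolynomial (Fin n) R ≃ₗ[R] MvPolynomial (Fin n) R) : Form n R →ₗ[R] R :=
  (lcoeff R 0).comp (Θ.symm.toLinearMap.comp (LinearMap.proj Finset.univ))

lemma topFun_d (α : Fin n → MvPolynomial (Fin n) R)
    (Θ : MvPolynomial (Fin n) R ≃ₗ[R] MvPolynomial (Fin n) R)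
    (hΘ : ∀ i p, Θ (X i * p) = pderiv i (Θ p) + α i * Θ p) (η : Form n R) :
    topFun Θ (dTwist α η) = 0 := by
  have e : η = fun s => Θ (Θ.symm (η s)) := by funext s; simp
  rw [e, dTwist_theta α Θ hΘ]
  simp only [topFun, LinearMap.comp_apply, LinearMap.proj_apply, LinearEquiv.coe_coe,
    LinearEquiv.symm_apply_apply, wedge1_apply, map_sum]
  refine Finset.sum_eq_zero fun i _ => ?_
  rw [sgn_mul_eq, map_smul]
  simp [lcoeff, coeff_X_mul']

lemma topFun_top (Θ : MvPolynomial (Fin n) R ≃ₗ[R] MvPolynomial (Fin n) R) (h1 : Θ 1 = 1) :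
    topFun Θ (topForm n R) = 1 := by
  have : Θ.symm 1 = 1 := by rw [LinearEquiv.symm_apply_eq, h1]
  simp [topFun, topForm, this, lcoeff]

lemma topForm_cocycle (α : Fin n → MvPolynomial (Fin n) R) :
    topForm n R ∈ cocycles α n := by
  constructor
  · intro s hs
    rw [topForm, if_neg]
    rintro rfl
    simp at hs
  · change dTwist α _ = 0
    funext s
    rw [dTwist_apply]
    refine Finset.sum_eq_zero fun i _ => ?_
    have : s.erase i ≠ Finset.univ := by
      intro h
      have := h ▸ Finset.mem_univ i
      simp at this
    simp [topForm, this]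

end Helpers

/-- For an invertible symmetric matrix `A` over a commutative
ring `R` and `f = ½xᵗAx`, the twisted de Rham cohomology `H^k_f(R)` is
concentrated in degree `n`: it vanishes for `k ≠ n`, and in degree `n` it is
isomorphic to `R`, generated by the class of `dx_1 ∧ ⋯ ∧ dx_n`. -/
theorem quadratic_twisted_deRham_cohomology {R : Type*} [CommRing R] {n : ℕ}
    (hn : 0 < n) (A B : Matrix (Fin n) (Fin n) R) (hsymm : A.IsSymm)
    (hAB : A * B = 1) (hBA : B * A = 1) :
    ∃ h : topForm n R ∈ cocycles (quadDf A) n,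
      (∀ k : ℕ, k ≠ n → Subsingleton (Htwist (quadDf A) k)) ∧
      Nonempty (Htwist (quadDf A) n ≃ₗ[R] R) ∧
      (∀ y : Htwist (quadDf A) n, ∃ r : R,
        y = r • Submodule.Quotient.mk
          (⟨topForm n R, h⟩ : cocycles (quadDf A) n)) := by
  obtain ⟨Θ, h1, hΘ⟩ := exists_equiv A B hsymm hAB hBA
  have h := topForm_cocycle (quadDf A)
  refine ⟨h, ?_, ?_, ?_⟩
  · intro k hk
    rw [Submodule.Quotient.subsingleton_iff, eq_top_iff]
    rintro ⟨ω, hω⟩ -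
    obtain ⟨η, hη, c, hc, e⟩ := twisted (quadDf A) Θ h1 hΘ k ω hω
    have hc0 : c • topForm n R = 0 := by
      funext s
      by_cases hs : s = Finset.univ
      · exact hc s (by subst hs; simpa using hk.symm)
      · simp [topForm, hs]
    rw [hc0, zero_add] at e
    exact ⟨η, hη, e.symm⟩
  · let L : cocycles (quadDf A) n →ₗ[R] R := (topFun Θ).comp (cocycles (quadDf A) n).subtype
    have hker : Submodule.comap (cocycles (quadDf A) n).subtype (cobounds (quadDf A) n)
        = LinearMap.ker L := by
      ext ⟨ω, hω⟩
      rw [LinearMap.mem_ker]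
      constructor
      · rintro ⟨η, hη, e⟩
        change topFun Θ ω = 0
        change dTwist _ η = ω at e
        rw [← e, topFun_d _ Θ hΘ]
      · intro hL
        change topFun Θ ω = 0 at hL
        obtain ⟨η, hη, c, hc, e⟩ := twisted (quadDf A) Θ h1 hΘ n ω hω
        rw [e, map_add, map_smul, topFun_d _ Θ hΘ, topFun_top Θ h1, add_zero, smul_eq_mul,
          mul_one] at hL
        rw [hL, zero_smul, zero_add] at e
        exact ⟨η, hη, e.symm⟩
    have hsurj : Function.Surjective L := by
      intro r
      refine ⟨r • ⟨topForm n R, h⟩, ?_⟩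
      rw [map_smul]
      change r • topFun Θ (topForm n R) = r
      rw [topFun_top Θ h1, smul_eq_mul, mul_one]
    exact ⟨(Submodule.quotEquivOfEq _ _ hker).trans (L.quotKerEquivOfSurjective hsurj)⟩
  · intro y
    obtain ⟨⟨ω, hω⟩, rfl⟩ := Submodule.Quotient.mk_surjective _ y
    obtain ⟨η, hη, c, hc, e⟩ := twisted (quadDf A) Θ h1 hΘ n ω hω
    refine ⟨c, ?_⟩
    rw [← Submodule.Quotient.mk_smul, Submodule.Quotient.eq]
    refine ⟨η, hη, ?_⟩
    change dTwist _ η = ω - c • topForm n R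
    rw [e]; abel

end
end

section
/- Let A be a real symmetric negative definite n×n matrix and let f(x) = ½xᵗAx. Then for every polynomial h ∈ ℝ[x_1,…,x_n] and every index a ∈ {1,…,n}, the function (∂h/∂x_a + (Σ_b A_{ab}x_b)·h)·e^{f(x)} is integrable on ℝⁿ and ∫_{ℝⁿ} (∂h/∂x_a(x) + (Σ_b A_{ab}x_b)·h(x))·e^{½xᵗAx} dx = 0. In other words, the linear functional I(g) = ∫_{ℝⁿ} g(x)e^{f(x)}dx on polynomials vanishes on every element of the form ∂_a h + (∂_a f)·h. -/
open MvPolynomial MeasureTheory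

noncomputable section

/-- The quadratic function `f(x) = ½xᵗAx` on `ℝⁿ`. -/
def quadFun {n : ℕ} (A : Matrix (Fin n) (Fin n) ℝ) (x : Fin n → ℝ) : ℝ :=
  (∑ i, ∑ j, A i j * x i * x j) / 2

lemma hasLine_poly {n : ℕ} (a : Fin n) (h : MvPolynomial (Fin n) ℝ) (x : Fin n → ℝ) :
    HasLineDerivAt ℝ (fun x => eval x h) (eval x (pderiv a h)) x (Pi.single a 1) := by
  unfold HasLineDerivAt
  induction h using MvPolynomial.induction_on with
  | C r => simpa using hasDerivAt_const (0:ℝ) r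
  | add p q hp hq =>
    simp only [map_add]
    exact hp.add hq
  | mul_X p i hp =>
    have hx : HasDerivAt (fun t : ℝ => (x + t • (Pi.single a 1 : Fin n → ℝ)) i)
        ((Pi.single a 1 : Fin n → ℝ) i) 0 := by
      have := ((hasDerivAt_id (0:ℝ)).mul_const ((Pi.single a 1 : Fin n → ℝ) i)).const_add (x i)
      simpa using this
    have := hp.mul hx
    convert! this using 1
    · funext t; simp
    · by_cases hi : i = a
      · subst hi; simp; ring
      · simp [pderiv_X, Pi.single_apply, hi, Ne.symm hi]; ring

def quadPoly {n : ℕ} (A : Matrix (Fin n) (Fin n) ℝ) : MvPolynomial (Fin n) ℝ :=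
  C (1/2) * ∑ i, ∑ j, C (A i j) * X i * X j

lemma eval_quadPoly {n : ℕ} (A : Matrix (Fin n) (Fin n) ℝ) (x : Fin n → ℝ) :
    eval x (quadPoly A) = quadFun A x := by
  simp [quadPoly, quadFun]; ring

lemma eval_pderiv_quadPoly {n : ℕ} (A : Matrix (Fin n) (Fin n) ℝ) (hA : A.IsSymm) (a : Fin n)
    (x : Fin n → ℝ) :
    eval x (pderiv a (quadPoly A)) = ∑ b, A a b * x b := by
  have h1 : ∀ i j : Fin n, eval x (pderiv a (C (A i j) * X i * X j)) =
      (if i = a then A i j * x j else 0) + (if j = a then A i j * x i else 0) := by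
    intro i j
    by_cases hi : i = a <;> by_cases hj : j = a <;>
      simp [pderiv_X, Pi.single_apply, hi, hj] <;> ring
  have h2 : ∀ b, A b a = A a b := fun b => hA.apply a b
  unfold quadPoly
  rw [pderiv_C_mul, eval_mul, eval_C]
  simp only [map_sum, h1, Finset.sum_add_distrib]
  rw [Finset.sum_comm]
  simp [h2]
  ring

lemma integrable_gauss {n : ℕ} {c : ℝ} (hc : 0 < c) (h : MvPolynomial (Fin n) ℝ) :
    Integrable (fun x : Fin n → ℝ => eval x h * Real.exp (-c * ∑ i, x i ^ 2)) := by
  induction h using MvPolynomial.induction_on' with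
  | monomial u r =>
    have h1 : ∀ i : Fin n, Integrable (fun t : ℝ => t ^ (u i) * Real.exp (-c * t ^ 2)) := by
      intro i
      have := integrable_rpow_mul_exp_neg_mul_sq hc (s := (u i : ℝ))
        (lt_of_lt_of_le (by norm_num) (Nat.cast_nonneg _))
      simpa using this
    have h2 := (Integrable.fintype_prod (μ := fun _ => volume) h1).const_mul r
    refine h2.congr (Filter.Eventually.of_forall fun x => ?_)
    simp only [eval_monomial, Finset.prod_mul_distrib, Finset.mul_sum, Real.exp_sum]
    rw [Finsupp.prod_fintype _ _ (by simp)]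
    ring
  | add p q hp hq =>
    simp only [map_add, add_mul]
    exact hp.add hq

lemma quad_bound {n : ℕ} (hn : 0 < n) (A : Matrix (Fin n) (Fin n) ℝ) (hneg : (-A).PosDef) :
    ∃ c : ℝ, 0 < c ∧ ∀ x, quadFun A x ≤ -c * ∑ i, x i ^ 2 := by
  have : Nonempty (Fin n) := ⟨⟨0, hn⟩⟩
  have hcont : Continuous (fun x : Fin n → ℝ => quadFun A x) := by
    unfold quadFun; fun_prop
  have hlt : ∀ x : Fin n → ℝ, x ≠ 0 → quadFun A x < 0 := by
    intro x hx
    have := hneg.dotProduct_mulVec_pos hx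
    have e : star x ⬝ᵥ ((-A).mulVec x) = -(2 * quadFun A x) := by
      simp only [quadFun, dotProduct, Matrix.mulVec, Matrix.neg_apply, Pi.star_apply, star_trivial,
        Finset.mul_sum, neg_mul, mul_neg, Finset.sum_neg_distrib]
      rw [mul_div_cancel₀ _ (by norm_num)]
      congr 1
      refine Finset.sum_congr rfl fun i _ => Finset.sum_congr rfl fun j _ => by ring
    linarith
  obtain ⟨y, hy, hmax⟩ := (isCompact_sphere (0 : Fin n → ℝ) 1).exists_isMaxOn
    (NormedSpace.sphere_nonempty.mpr zero_le_one) hcont.continuousOn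
  have hy0 : y ≠ 0 := by
    rintro rfl; simp at hy
  have hq := hlt y hy0
  have hn' : (0:ℝ) < n := by exact_mod_cast hn
  refine ⟨-quadFun A y / n, by apply div_pos <;> linarith, fun x => ?_⟩
  have hs : ∑ i, x i ^ 2 ≤ n * ‖x‖ ^ 2 := by
    have : ∀ i ∈ Finset.univ, x i ^ 2 ≤ ‖x‖ ^ 2 := fun i _ => by
      have := norm_le_pi_norm x i
      rw [← sq_abs, ← Real.norm_eq_abs]; gcongr
    simpa using Finset.sum_le_sum this
  have hsc : quadFun A x ≤ ‖x‖ ^ 2 * quadFun A y := by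
    by_cases hx : x = 0
    · subst hx; simp [quadFun]
    · have hx' : ‖x‖ ≠ 0 := norm_ne_zero_iff.mpr hx
      have h1 : quadFun A (‖x‖⁻¹ • x) ≤ quadFun A y := hmax (by simp [norm_smul, hx'])
      have h2 : quadFun A x = ‖x‖ ^ 2 * quadFun A (‖x‖⁻¹ • x) := by
        simp only [quadFun, Pi.smul_apply, smul_eq_mul]
        rw [← mul_div_assoc, Finset.mul_sum]
        congr 1
        refine Finset.sum_congr rfl fun i _ => ?_
        rw [Finset.mul_sum]
        refine Finset.sum_congr rfl fun j _ => ?_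
        field_simp
      rw [h2]; gcongr
  refine hsc.trans ?_
  have : - (-quadFun A y / n) * (n * ‖x‖^2) ≤ - (-quadFun A y / n) * ∑ i, x i ^ 2 := by
    apply mul_le_mul_of_nonpos_left hs
    have : 0 < -quadFun A y / n := by apply div_pos <;> linarith
    linarith
  refine le_trans (le_of_eq ?_) this
  field_simp

lemma integrable_quad {n : ℕ} (hn : 0 < n) (A : Matrix (Fin n) (Fin n) ℝ) (hneg : (-A).PosDef)
    (h : MvPolynomial (Fin n) ℝ) :
    Integrable (fun x : Fin n → ℝ => eval x h * Real.exp (quadFun A x)) := by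
  obtain ⟨c, hc, hb⟩ := quad_bound hn A hneg
  have hcont : Continuous (fun x : Fin n → ℝ => quadFun A x) := by
    unfold quadFun; fun_prop
  refine (integrable_gauss hc h).mono
    ((MvPolynomial.continuous_eval h).mul (Real.continuous_exp.comp hcont)).aestronglyMeasurable
    (Filter.Eventually.of_forall fun x => ?_)
  rw [norm_mul, norm_mul, Real.norm_of_nonneg (Real.exp_nonneg _),
    Real.norm_of_nonneg (Real.exp_nonneg _)]
  gcongr
  exact hb x

/-- Let `A` be a real symmetric negative definite `n×n` matrix
and `f(x) = ½xᵗAx`.  For every polynomial `h ∈ ℝ[x_1,…,x_n]` and every index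
`a`, the function `(∂h/∂x_a + (Σ_b A_{ab}x_b)·h)·e^{f(x)}` is integrable on
`ℝⁿ` and its integral vanishes: the functional `g ↦ ∫ g e^f dx` vanishes on
every element of the form `∂_a h + (∂_a f)·h`. -/
theorem gaussian_integration_by_parts_vanishes {n : ℕ} (hn : 0 < n)
    (A : Matrix (Fin n) (Fin n) ℝ) (hA : A.IsSymm) (hneg : (-A).PosDef)
    (h : MvPolynomial (Fin n) ℝ) (a : Fin n) :
    Integrable (fun x : Fin n → ℝ =>
      eval x (pderiv a h + (∑ b, C (A a b) * X b) * h) *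
        Real.exp (quadFun A x)) ∧
    ∫ x : Fin n → ℝ,
      eval x (pderiv a h + (∑ b, C (A a b) * X b) * h) *
        Real.exp (quadFun A x) = 0 := by
  have hi := integrable_quad hn A hneg
  refine ⟨hi _, ?_⟩
  have hg : ∀ x, HasLineDerivAt ℝ (fun x => Real.exp (quadFun A x))
      (Real.exp (quadFun A x) * ∑ b, A a b * x b) x (Pi.single a 1) := by
    intro x
    have h1 := hasLine_poly a (quadPoly A) x
    rw [eval_pderiv_quadPoly A hA] at h1
    simp only [eval_quadPoly] at h1
    unfold HasLineDerivAt at h1 ⊢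
    simpa using h1.exp
  have i1 := hi (pderiv a h)
  have i2 := hi ((∑ b, C (A a b) * X b) * h)
  have i2' : Integrable (fun x : Fin n → ℝ =>
      eval x h * (Real.exp (quadFun A x) * ∑ b, A a b * x b)) := by
    refine i2.congr (Filter.Eventually.of_forall fun x => ?_)
    simp; ring
  have key := integral_bilinear_hasLineDerivAt_right_eq_neg_left_of_integrable
    (B := ContinuousLinearMap.mul ℝ ℝ) (μ := (volume : Measure (Fin n → ℝ)))
    (f := fun x => eval x h) (g := fun x => Real.exp (quadFun A x))
    (v := Pi.single a 1) i1 i2' (hi h) (fun x _ => hasLine_poly a h x) (fun x _ => hg x)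
  simp only [ContinuousLinearMap.mul_apply'] at key
  have e : ∀ x : Fin n → ℝ, eval x (pderiv a h + (∑ b, C (A a b) * X b) * h) *
        Real.exp (quadFun A x) = eval x (pderiv a h) * Real.exp (quadFun A x) +
        eval x h * (Real.exp (quadFun A x) * ∑ b, A a b * x b) := by
    intro x; simp; ring
  simp only [e]
  rw [integral_add i1 i2', key]
  ring

end
end

section
/- Let R be a commutative ring, n a positive integer, and A an invertible symmetric n×n matrix over R. Let M ⊆ R[x_1,…,x_n] be the R-submodule generated by all elements of the form ∂h/∂x_a + (Σ_b A_{ab}x_b)·h with h ∈ R[x_1,…,x_n] and a ∈ {1,…,n}. Then: (i) for every g ∈ R[x_1,…,x_n] there is a unique r_g ∈ R such that g − r_g·1 ∈ M; and (ii) every R-linear functional I : R[x_1,…,x_n] → R that vanishes on M satisfies I(g) = r_g·I(1) for all g. In particular, any such functional is determined up to a constant factor: if additionally I(1) = 1 then I is unique. -/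
open MvPolynomial

noncomputable section

/-- The `R`-submodule of `R[x_1,…,x_n]` generated by all elements of the form
`∂h/∂x_a + (Σ_b A_{ab}x_b)·h`, i.e. by the coefficients of twisted-exact
top-degree forms for `f = ½xᵗAx`. -/
def twistedExact {n : ℕ} {R : Type*} [CommRing R]
    (A : Matrix (Fin n) (Fin n) R) : Submodule R (MvPolynomial (Fin n) R) :=
  Submodule.span R
    {p | ∃ (a : Fin n) (h : MvPolynomial (Fin n) R),
      p = pderiv a h + (∑ b, C (A a b) * X b) * h}

def wickT {R : Type*} [CommRing R] {n : ℕ} (B : Matrix (Fin n) (Fin n) R) (c : Fin n) :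
    Module.End R (MvPolynomial (Fin n) R) :=
  LinearMap.mulLeft R (X c) - ∑ a, B c a • ((pderiv a : Derivation R (MvPolynomial (Fin n) R) (MvPolynomial (Fin n) R)) :
    MvPolynomial (Fin n) R →ₗ[R] MvPolynomial (Fin n) R)

lemma wickT_apply {R : Type*} [CommRing R] {n : ℕ} (B : Matrix (Fin n) (Fin n) R) (c : Fin n)
    (h : MvPolynomial (Fin n) R) :
    wickT B c h = X c * h - ∑ a, B c a • pderiv a h := by
  simp [wickT]

lemma pderiv_pderiv_comm {R : Type*} [CommRing R] {n : ℕ} (a b : Fin n)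
    (h : MvPolynomial (Fin n) R) : pderiv a (pderiv b h) = pderiv b (pderiv a h) := by
  have : ⁅(pderiv a : Derivation R (MvPolynomial (Fin n) R) (MvPolynomial (Fin n) R)),
      (pderiv b : Derivation R (MvPolynomial (Fin n) R) (MvPolynomial (Fin n) R))⁆ = 0 := by
    apply MvPolynomial.derivation_ext
    intro i
    rw [Derivation.commutator_apply]
    simp only [pderiv_X, Pi.single_apply]
    split_ifs <;> simp
  have h2 := congrArg (fun D : Derivation R (MvPolynomial (Fin n) R) (MvPolynomial (Fin n) R) => D h) this
  simp only [Derivation.commutator_apply] at h2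
  exact sub_eq_zero.1 h2

lemma pderiv_wickT {R : Type*} [CommRing R] {n : ℕ} (B : Matrix (Fin n) (Fin n) R) (a c : Fin n)
    (h : MvPolynomial (Fin n) R) :
    pderiv a (wickT B c h) = wickT B c (pderiv a h) + pderiv a (X c) * h := by
  simp only [wickT_apply, map_sub, map_sum, Derivation.leibniz, Derivation.map_smul, smul_eq_mul,
    pderiv_pderiv_comm a]
  ring

lemma wickT_comm {R : Type*} [CommRing R] {n : ℕ} (B : Matrix (Fin n) (Fin n) R)
    (hB : B.IsSymm) (c d : Fin n) : wickT B c * wickT B d = wickT B d * wickT B c := by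
  have key : ∀ c d h, wickT B c (wickT B d h) =
      X c * wickT B d h - ∑ a, B c a • wickT B d (pderiv a h) - B c d • h := by
    intro c d h
    rw [wickT_apply B c]
    simp only [pderiv_wickT, smul_add, Finset.sum_add_distrib]
    have : ∑ a, B c a • (pderiv a (X d : MvPolynomial (Fin n) R) * h) = B c d • h := by
      rw [Finset.sum_eq_single d]
      · simp
      · intro b _ hb
        simp [pderiv_X_of_ne (Ne.symm hb)]
      · simp
    rw [this]; ring
  refine LinearMap.ext fun h => ?_
  simp only [Module.End.mul_apply]
  rw [key c d, key d c, hB.apply d c]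
  have e : ∀ c d, ∑ a, B c a • wickT B d (pderiv a h) =
      X d * (∑ a, B c a • pderiv a h) - ∑ a, ∑ b, B c a • B d b • pderiv b (pderiv a h) := by
    intro c d
    simp only [wickT_apply, smul_sub, Finset.sum_sub_distrib, Finset.mul_sum, mul_smul_comm,
      Finset.smul_sum]
  rw [e, e, wickT_apply, wickT_apply]
  have e2 : ∑ a, ∑ b, B c a • B d b • pderiv b (pderiv a h) =
      ∑ a, ∑ b, B d a • B c b • pderiv b (pderiv a h) := by
    rw [Finset.sum_comm]
    refine Finset.sum_congr rfl fun a _ => Finset.sum_congr rfl fun b _ => ?_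
    rw [pderiv_pderiv_comm, smul_comm]
  rw [e2]; ring

lemma exists_wick {R : Type*} [CommRing R] {n : ℕ} (B : Matrix (Fin n) (Fin n) R)
    (hB : B.IsSymm) : ∃ W : MvPolynomial (Fin n) R →ₗ[R] MvPolynomial (Fin n) R,
      W 1 = 1 ∧ ∀ c h, W (X c * h) = wickT B c (W h) := by
  letI : CommRing (Algebra.adjoin R (Set.range (wickT B))) :=
    Algebra.adjoinCommRingOfComm R (by
      rintro _ ⟨c, rfl⟩ _ ⟨d, rfl⟩
      exact wickT_comm B hB c d)
  let φ : MvPolynomial (Fin n) R →ₐ[R] Algebra.adjoin R (Set.range (wickT B)) :=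
    aeval (fun c => ⟨wickT B c, Algebra.subset_adjoin ⟨c, rfl⟩⟩)
  let ψ : MvPolynomial (Fin n) R →ₐ[R] Module.End R (MvPolynomial (Fin n) R) :=
    (Algebra.adjoin R (Set.range (wickT B))).val.comp φ
  refine ⟨(LinearMap.applyₗ (1 : MvPolynomial (Fin n) R)).comp ψ.toLinearMap, ?_, ?_⟩
  · simp
  · intro c h
    have : ψ (X c) = wickT B c := by
      simp [ψ, φ]
    simp [this]

lemma exists_integral {R : Type*} [CommRing R] {n : ℕ}
    (A B : Matrix (Fin n) (Fin n) R) (hB : B.IsSymm) (hAB : A * B = 1) :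
    ∃ E : MvPolynomial (Fin n) R →ₗ[R] R, E 1 = 1 ∧ ∀ m ∈ twistedExact A, E m = 0 := by
  obtain ⟨W, W1, WX⟩ := exists_wick B hB
  have hd : ∀ a h, pderiv a (W h) = W (pderiv a h) := by
    intro a h
    induction h using MvPolynomial.induction_on with
    | C r =>
      have : (C r : MvPolynomial (Fin n) R) = r • 1 := by simp [smul_eq_C_mul]
      rw [this]; simp [W1]
    | add p q hp hq => simp [hp, hq]
    | mul_X p c hp =>
      rw [mul_comm, WX, pderiv_wickT, hp, Derivation.leibniz, map_add, smul_eq_mul, WX,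
        smul_eq_mul]
      congr 1
      by_cases hc : c = a
      · subst hc; simp
      · simp [pderiv_X_of_ne hc]
  let E : MvPolynomial (Fin n) R →ₗ[R] R := (lcoeff R 0).comp W
  have hE : ∀ h, E h = constantCoeff (W h) := fun h => rfl
  have EX : ∀ c h, E (X c * h) = - ∑ a, B c a * E (pderiv a h) := by
    intro c h
    simp [hE, WX, wickT_apply, hd, map_sum, smul_eq_C_mul]
  refine ⟨E, by simp [hE, W1], ?_⟩
  intro m hm
  suffices twistedExact A ≤ LinearMap.ker E from this hm
  refine Submodule.span_le.2 ?_
  rintro _ ⟨a, h, rfl⟩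
  simp only [SetLike.mem_coe, LinearMap.mem_ker, map_add, Finset.sum_mul, map_sum,
    ← smul_eq_C_mul, smul_mul_assoc, map_smul, EX, smul_eq_mul, mul_neg, Finset.mul_sum, Finset.sum_neg_distrib]
  rw [Finset.sum_comm]
  simp only [← mul_assoc, ← Finset.sum_mul, ← Matrix.mul_apply, hAB]
  simp [Matrix.one_apply]

lemma exists_rep {R : Type*} [CommRing R] {n : ℕ}
    (A B : Matrix (Fin n) (Fin n) R) (hBA : B * A = 1) (g : MvPolynomial (Fin n) R) :
    ∃ r : R, g - C r ∈ twistedExact A := by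
  have red : ∀ c h, X c * h + ∑ a, B c a • pderiv a h ∈ twistedExact A := by
    intro c h
    have : X c * h + ∑ a, B c a • pderiv a h =
        ∑ a, B c a • (pderiv a h + (∑ b, C (A a b) * X b) * h) := by
      simp only [smul_add, Finset.sum_add_distrib]
      rw [add_comm]
      congr 1
      simp only [smul_eq_C_mul, ← mul_assoc, ← Finset.sum_mul, Finset.mul_sum]
      rw [Finset.sum_comm]
      simp only [← C_mul, ← Finset.sum_mul, ← map_sum, ← Matrix.mul_apply, hBA]
      simp [Matrix.one_apply]
    rw [this]
    exact Submodule.sum_mem _ fun a _ => Submodule.smul_mem _ _ (Submodule.subset_span ⟨a, h, rfl⟩)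
  let N : Submodule R (MvPolynomial (Fin n) R) := twistedExact A ⊔ Submodule.span R {1}
  have hmon : ∀ k : ℕ, ∀ s : Fin n →₀ ℕ, s.degree = k → ∀ a : R, monomial s a ∈ N := by
    intro k
    induction k using Nat.strong_induction_on with
    | _ k ih =>
      intro s hs a
      by_cases h0 : s = 0
      · subst h0
        refine Submodule.mem_sup_right (Submodule.mem_span_singleton.2 ⟨a, ?_⟩)
        simp [smul_eq_C_mul]
      · obtain ⟨c, hc⟩ := Finsupp.ne_iff.1 h0
        have hle : Finsupp.single c 1 ≤ s := by
          simpa [Finsupp.single_le_iff] using Nat.one_le_iff_ne_zero.2 hc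
        obtain ⟨t, rfl⟩ := exists_add_of_le hle
        have e : monomial (Finsupp.single c 1 + t) a = X c * monomial t a := by
          rw [X, monomial_mul, one_mul]
        have hdeg : t.degree < k := by
          rw [← hs]; simp
        rw [e]
        have h1 := Submodule.mem_sup_left (T := Submodule.span R {1}) (red c (monomial t a))
        refine (Submodule.add_mem_iff_left N ?_).1 h1
        refine Submodule.sum_mem _ fun b _ => Submodule.smul_mem _ _ ?_
        rw [pderiv_monomial]
        exact ih _ (lt_of_le_of_lt (Finsupp.degree_mono tsub_le_self) hdeg) _ rfl _
  have hg : g ∈ N := by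
    rw [g.as_sum]
    exact Submodule.sum_mem _ fun s _ => hmon _ s rfl _
  obtain ⟨m, hm, y, hy, rfl⟩ := Submodule.mem_sup.1 hg
  obtain ⟨r, rfl⟩ := Submodule.mem_span_singleton.1 hy
  exact ⟨r, by simpa [smul_eq_C_mul] using hm⟩

/-- Let `A` be an invertible symmetric matrix over a
commutative ring `R` and let `M` be the submodule generated by the elements
`∂_a h + (∂_a f)h` with `f = ½xᵗAx`.  Then (i) every `g` is congruent modulo
`M` to a unique constant `r_g·1`; (ii) every `R`-linear functional `I`
vanishing on `M` satisfies `I(g) = r_g·I(1)`; in particular such a functional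
is unique once normalized by `I(1) = 1`. -/
theorem homological_integral_unique {R : Type*} [CommRing R] {n : ℕ}
    (hn : 0 < n) (A B : Matrix (Fin n) (Fin n) R) (hsymm : A.IsSymm)
    (hAB : A * B = 1) (hBA : B * A = 1) :
    (∀ g : MvPolynomial (Fin n) R, ∃! r : R, g - C r ∈ twistedExact A) ∧
    (∀ I : MvPolynomial (Fin n) R →ₗ[R] R,
      (∀ m ∈ twistedExact A, I m = 0) →
      ∀ (g : MvPolynomial (Fin n) R) (r : R),
        g - C r ∈ twistedExact A → I g = r * I 1) ∧
    (∀ I I' : MvPolynomial (Fin n) R →ₗ[R] R,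
      (∀ m ∈ twistedExact A, I m = 0) → (∀ m ∈ twistedExact A, I' m = 0) →
      I 1 = 1 → I' 1 = 1 → I = I') := by
  have hB : B.IsSymm := by
    have h1 : B.transpose * A = 1 := by
      have := congrArg Matrix.transpose hAB
      rwa [Matrix.transpose_mul, hsymm.eq, Matrix.transpose_one] at this
    calc B.transpose = B.transpose * (A * B) := by rw [hAB, mul_one]
      _ = B := by rw [← mul_assoc, h1, one_mul]
  have hI : ∀ I : MvPolynomial (Fin n) R →ₗ[R] R,
      (∀ m ∈ twistedExact A, I m = 0) →
      ∀ (g : MvPolynomial (Fin n) R) (r : R),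
        g - C r ∈ twistedExact A → I g = r * I 1 := by
    intro I hI g r hg
    have h1 := hI _ hg
    have h2 : (C r : MvPolynomial (Fin n) R) = r • 1 := by simp [smul_eq_C_mul]
    rw [map_sub, h2, map_smul, smul_eq_mul] at h1
    exact sub_eq_zero.1 h1
  refine ⟨fun g => ?_, hI, ?_⟩
  · obtain ⟨E, E1, hE⟩ := exists_integral A B hB hAB
    obtain ⟨r, hr⟩ := exists_rep A B hBA g
    refine ⟨r, hr, fun r' hr' => ?_⟩
    have h1 := hI E hE g r hr
    have h2 := hI E hE g r' hr'
    rw [E1, mul_one] at h1 h2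
    rw [← h1, ← h2]
  · intro I I' h h' h1 h1'
    refine LinearMap.ext fun g => ?_
    obtain ⟨r, hr⟩ := exists_rep A B hBA g
    rw [hI I h g r hr, hI I' h' g r hr, h1, h1']

end
end

section
/- Let A be an n×n symmetric negative definite matrix with integer entries that is invertible over ℤ (i.e., A^{-1} also has integer entries), and let g, h ∈ ℤ[x_1,…,x_n]. For each k ≥ 0 define real numbers a_k = (1/k!)∫_{ℝⁿ} g(x)·h(x)^k·e^{½xᵗAx} dx and b_k = (1/k!)∫_{ℝⁿ} h(x)^k·e^{½xᵗAx} dx, so that Σ_k a_k λ^k and Σ_k b_k λ^k are the perturbative expansions of ∫ g·e^{½xᵗAx+λh} dx and ∫ e^{½xᵗAx+λh} dx as formal power series in λ. Then b_0 ≠ 0, and every coefficient of the quotient formal power series (Σ_k a_k λ^k)·(Σ_k b_k λ^k)^{-1} ∈ ℝ[[λ]] is an integer (lies in the image of ℤ in ℝ). -/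
open MvPolynomial MeasureTheory

noncomputable section

/-- The quadratic function `f(x) = ½xᵗAx` on `ℝⁿ` associated to an integer
matrix `A`. -/
def quadFunZ {n : ℕ} (A : Matrix (Fin n) (Fin n) ℤ) (x : Fin n → ℝ) : ℝ :=
  (∑ i, ∑ j, (A i j : ℝ) * x i * x j) / 2

/-- The `k`-th coefficient `(1/k!)∫ g·h^k·e^{½xᵗAx} dx` of the perturbative
expansion of `∫ g e^{½xᵗAx+λh} dx` in powers of `λ`. -/
def pertCoeff {n : ℕ} (A : Matrix (Fin n) (Fin n) ℤ)
    (g h : MvPolynomial (Fin n) ℤ) (k : ℕ) : ℝ :=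
  ((Nat.factorial k : ℝ)⁻¹) *
    ∫ x : Fin n → ℝ,
      eval x (MvPolynomial.map (Int.castRingHom ℝ) g) *
        (eval x (MvPolynomial.map (Int.castRingHom ℝ) h)) ^ k *
        Real.exp (quadFunZ A x)

section Helpers

variable {n : ℕ}

lemma pq_eval_eq (p : MvPolynomial (Fin n) ℤ) (x : Fin n → ℝ) :
    eval x (MvPolynomial.map (Int.castRingHom ℝ) p) = aeval x p := by
  rw [eval_map, aeval_def]; rfl

lemma pq_quad_continuous (A : Matrix (Fin n) (Fin n) ℤ) : Continuous (quadFunZ A) := by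
  unfold quadFunZ
  fun_prop

lemma pq_quad_neg (A : Matrix (Fin n) (Fin n) ℤ)
    (hneg : (-(A.map (fun z : ℤ => (z : ℝ)))).PosDef) (x : Fin n → ℝ) (hx : x ≠ 0) :
    quadFunZ A x < 0 := by
  have h := hneg.dotProduct_mulVec_pos hx
  simp only [dotProduct, Matrix.mulVec, Matrix.neg_apply, Matrix.map_apply, star_trivial,
    Pi.star_apply, neg_mul, Finset.sum_neg_distrib, mul_neg, Finset.mul_sum] at h
  unfold quadFunZ
  have : ∑ i, ∑ j, (A i j : ℝ) * x i * x j = ∑ i, ∑ j, x i * ((A i j : ℝ) * x j) :=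
    Finset.sum_congr rfl fun i _ => Finset.sum_congr rfl fun j _ => by ring
  rw [this]
  linarith

lemma pq_quad_smul (A : Matrix (Fin n) (Fin n) ℤ) (t : ℝ) (x : Fin n → ℝ) :
    quadFunZ A (t • x) = t ^ 2 * quadFunZ A x := by
  unfold quadFunZ
  rw [← mul_div_assoc, Finset.mul_sum]
  congr 1
  refine Finset.sum_congr rfl fun i _ => ?_
  rw [Finset.mul_sum]
  refine Finset.sum_congr rfl fun j _ => ?_
  simp only [Pi.smul_apply, smul_eq_mul]
  ring

lemma pq_quad_bound (hn : 0 < n) (A : Matrix (Fin n) (Fin n) ℤ)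
    (hneg : (-(A.map (fun z : ℤ => (z : ℝ)))).PosDef) :
    ∃ c : ℝ, 0 < c ∧ ∀ x : Fin n → ℝ, quadFunZ A x ≤ ∑ i, (-c * x i ^ 2) := by
  have : Nonempty (Fin n) := ⟨⟨0, hn⟩⟩
  obtain ⟨y, hy, hmax⟩ := (isCompact_sphere (0 : Fin n → ℝ) 1).exists_isMaxOn
    (NormedSpace.sphere_nonempty.2 zero_le_one) (pq_quad_continuous A).continuousOn
  have hy0 : y ≠ 0 := by
    rintro rfl
    simp at hy
  have hq := pq_quad_neg A hneg y hy0
  have hn' : (0 : ℝ) < n := by exact_mod_cast hn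
  refine ⟨-quadFunZ A y / n, div_pos (by linarith) hn', fun x => ?_⟩
  have h1 : quadFunZ A x ≤ ‖x‖ ^ 2 * quadFunZ A y := by
    by_cases hx : x = 0
    · subst hx
      simp [quadFunZ]
    · have hx' : ‖x‖ ≠ 0 := norm_ne_zero_iff.2 hx
      have h2 : quadFunZ A (‖x‖⁻¹ • x) ≤ quadFunZ A y := by
        apply hmax
        simp [norm_smul, hx']
      have h3 : x = ‖x‖ • (‖x‖⁻¹ • x) := by
        rw [smul_smul, mul_inv_cancel₀ hx', one_smul]
      calc quadFunZ A x = ‖x‖ ^ 2 * quadFunZ A (‖x‖⁻¹ • x) := by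
            rw [← pq_quad_smul, ← h3]
        _ ≤ _ := by gcongr
  have h4 : ∑ i, x i ^ 2 ≤ n * ‖x‖ ^ 2 := by
    calc ∑ i, x i ^ 2 ≤ ∑ _i : Fin n, ‖x‖ ^ 2 := by
          refine Finset.sum_le_sum fun i _ => ?_
          rw [← sq_abs (x i)]
          have := norm_le_pi_norm x i
          rw [Real.norm_eq_abs] at this
          gcongr
      _ = _ := by simp
  rw [← Finset.mul_sum]
  have h5 : -(-quadFunZ A y / n) * ∑ i, x i ^ 2 = (quadFunZ A y / n) * ∑ i, x i ^ 2 := by ring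
  rw [h5]
  refine h1.trans ?_
  have h6 : ‖x‖ ^ 2 * quadFunZ A y = (quadFunZ A y / n) * (n * ‖x‖ ^ 2) := by
    field_simp
  rw [h6]
  exact mul_le_mul_of_nonpos_left h4 (div_nonpos_of_nonpos_of_nonneg hq.le hn'.le)

lemma pq_aeval_continuous (p : MvPolynomial (Fin n) ℤ) :
    Continuous fun x : Fin n → ℝ => aeval x p := by
  simp_rw [← pq_eval_eq]
  exact MvPolynomial.continuous_eval _

lemma pq_integrable (hn : 0 < n) (A : Matrix (Fin n) (Fin n) ℤ)
    (hneg : (-(A.map (fun z : ℤ => (z : ℝ)))).PosDef) (p : MvPolynomial (Fin n) ℤ) :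
    Integrable fun x : Fin n → ℝ => aeval x p * Real.exp (quadFunZ A x) := by
  obtain ⟨c, hc, hb⟩ := pq_quad_bound hn A hneg
  induction p using MvPolynomial.induction_on' with
  | add p q hp hq =>
    refine (hp.add hq).congr (Filter.Eventually.of_forall fun x => ?_)
    simp [add_mul]
  | monomial s a =>
    have h1 : Integrable fun x : Fin n → ℝ =>
        (a : ℝ) * ∏ i, (x i ^ (s i) * Real.exp (-c * x i ^ 2)) := by
      refine Integrable.const_mul ?_ _
      refine Integrable.fintype_prod (f := fun i (y : ℝ) => y ^ (s i) * Real.exp (-c * y ^ 2))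
        fun i => ?_
      have := integrable_rpow_mul_exp_neg_mul_sq hc (s := (s i : ℝ))
        (lt_of_lt_of_le (by norm_num) (Nat.cast_nonneg (s i)))
      simpa using this
    refine h1.mono ((pq_aeval_continuous _).mul
      (Real.continuous_exp.comp (pq_quad_continuous A))).aestronglyMeasurable
      (Filter.Eventually.of_forall fun x => ?_)
    have h2 : aeval x (monomial s a) = (a : ℝ) * ∏ i, x i ^ (s i) := by
      rw [aeval_monomial, Finsupp.prod_fintype _ _ (by simp)]
      simp
    rw [h2, Finset.prod_mul_distrib, ← Real.exp_sum, ← mul_assoc, norm_mul, norm_mul _ (Real.exp _)]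
    gcongr
    rw [Real.norm_eq_abs, Real.norm_eq_abs, Real.abs_exp, Real.abs_exp]
    exact Real.exp_le_exp.2 (hb x)

/-- The Gaussian integral functional on integer polynomials. -/
def pqI (A : Matrix (Fin n) (Fin n) ℤ) (p : MvPolynomial (Fin n) ℤ) : ℝ :=
  ∫ x : Fin n → ℝ, aeval x p * Real.exp (quadFunZ A x)

lemma pq_pertCoeff (A : Matrix (Fin n) (Fin n) ℤ) (g h : MvPolynomial (Fin n) ℤ) (k : ℕ) :
    pertCoeff A g h k = ((Nat.factorial k : ℝ)⁻¹) * pqI A (g * h ^ k) := by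
  unfold pertCoeff pqI
  simp_rw [pq_eval_eq, map_mul, map_pow]

lemma pqI_add (hn : 0 < n) (A : Matrix (Fin n) (Fin n) ℤ)
    (hneg : (-(A.map (fun z : ℤ => (z : ℝ)))).PosDef) (p q : MvPolynomial (Fin n) ℤ) :
    pqI A (p + q) = pqI A p + pqI A q := by
  unfold pqI
  rw [← integral_add (pq_integrable hn A hneg p) (pq_integrable hn A hneg q)]
  simp [add_mul]

lemma pqI_C_mul (A : Matrix (Fin n) (Fin n) ℤ) (a : ℤ) (p : MvPolynomial (Fin n) ℤ) :
    pqI A (C a * p) = a * pqI A p := by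
  unfold pqI
  rw [← integral_const_mul]
  simp [mul_assoc]

lemma pqI_sum (hn : 0 < n) (A : Matrix (Fin n) (Fin n) ℤ)
    (hneg : (-(A.map (fun z : ℤ => (z : ℝ)))).PosDef) {ι : Type*} (s : Finset ι)
    (f : ι → MvPolynomial (Fin n) ℤ) :
    pqI A (∑ i ∈ s, f i) = ∑ i ∈ s, pqI A (f i) := by
  let φ : MvPolynomial (Fin n) ℤ →+ ℝ := AddMonoidHom.mk' (pqI A) (pqI_add hn A hneg)
  exact map_sum φ f s

lemma pq_lineDeriv_poly (p : MvPolynomial (Fin n) ℤ) (j : Fin n) (x : Fin n → ℝ) :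
    HasLineDerivAt ℝ (fun x : Fin n → ℝ => (aeval x p : ℝ)) (aeval x (pderiv j p)) x
      (Pi.single j 1) := by
  unfold HasLineDerivAt
  induction p using MvPolynomial.induction_on with
  | C a => simpa using hasDerivAt_const (0 : ℝ) (a : ℝ)
  | add p q hp hq => 
    have h := hp.add hq
    simp only [map_add]
    exact h
  | mul_X p i hp =>
    have hX : HasDerivAt (fun t : ℝ => (x + t • (Pi.single j (1 : ℝ) : Fin n → ℝ)) i)
        ((Pi.single j (1 : ℝ) : Fin n → ℝ) i) 0 := by
      simpa using ((hasDerivAt_id (0 : ℝ)).mul_const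
        ((Pi.single j (1 : ℝ) : Fin n → ℝ) i)).const_add (x i)
    have h := hp.mul hX
    simp only [map_mul, aeval_X]
    refine HasDerivAt.congr_deriv h ?_
    rw [pderiv_mul, pderiv_X]
    by_cases hij : i = j
    · subst hij; simp
    · simp [hij]

lemma pq_lineDeriv_exp (A : Matrix (Fin n) (Fin n) ℤ) (hsymm : A.IsSymm) (j : Fin n)
    (x : Fin n → ℝ) :
    HasLineDerivAt ℝ (fun x : Fin n → ℝ => Real.exp (quadFunZ A x))
      (aeval x (∑ k, C (A j k) * X k : MvPolynomial (Fin n) ℤ) * Real.exp (quadFunZ A x)) x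
      (Pi.single j 1) := by
  have hq : HasLineDerivAt ℝ (quadFunZ A)
      (aeval x (∑ k, C (A j k) * X k : MvPolynomial (Fin n) ℤ)) x (Pi.single j 1) := by
    have h0 := pq_lineDeriv_poly (∑ i, ∑ k, C (A i k) * X i * X k) j x
    unfold HasLineDerivAt at h0 ⊢
    have h := h0.div_const 2
    have hfun : (fun t : ℝ => quadFunZ A (x + t • (Pi.single j (1 : ℝ) : Fin n → ℝ))) =
        fun t : ℝ => (aeval (x + t • (Pi.single j (1 : ℝ) : Fin n → ℝ))
          (∑ i, ∑ k, C (A i k) * X i * X k : MvPolynomial (Fin n) ℤ) : ℝ) / 2 := by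
      funext t
      simp only [quadFunZ, map_sum, map_mul, aeval_X, eq_intCast, map_intCast]
    rw [hfun]
    refine HasDerivAt.congr_deriv h ?_
    have e : ∀ i : Fin n, A i j = A j i := fun i => hsymm.apply j i
    have hX : ∀ i : Fin n, pderiv j (X i : MvPolynomial (Fin n) ℤ) = if i = j then 1 else 0 := by
      intro i
      rw [pderiv_X, Pi.single_apply]
    have hd : pderiv j (∑ i, ∑ k, C (A i k) * X i * X k : MvPolynomial (Fin n) ℤ) =
        2 * ∑ k, C (A j k) * X k := by
      simp only [map_sum, pderiv_mul, pderiv_C, hX, zero_mul, zero_add, mul_ite, mul_one,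
        mul_zero, ite_mul, Finset.sum_add_distrib, Finset.sum_ite_eq', Finset.mem_univ, if_true,
        Finset.sum_ite_irrel, Finset.sum_const_zero, e]
      ring
    rw [hd, map_mul, map_ofNat]
    ring
  unfold HasLineDerivAt at hq ⊢
  have h := hq.exp
  simp only [zero_smul, add_zero] at h
  rwa [mul_comm] at h

lemma pqI_parts (hn : 0 < n) (A : Matrix (Fin n) (Fin n) ℤ) (hsymm : A.IsSymm)
    (hneg : (-(A.map (fun z : ℤ => (z : ℝ)))).PosDef) (p : MvPolynomial (Fin n) ℤ) (j : Fin n) :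
    pqI A (p * ∑ k, C (A j k) * X k) = - pqI A (pderiv j p) := by
  have h := integral_bilinear_hasLineDerivAt_right_eq_neg_left_of_integrable
    (μ := (volume : Measure (Fin n → ℝ))) (B := ContinuousLinearMap.mul ℝ ℝ)
    (f := fun x : Fin n → ℝ => (aeval x p : ℝ)) (f' := fun x => aeval x (pderiv j p))
    (g := fun x => Real.exp (quadFunZ A x))
    (g' := fun x => aeval x (∑ k, C (A j k) * X k : MvPolynomial (Fin n) ℤ) *
      Real.exp (quadFunZ A x)) (v := Pi.single j 1)
    (pq_integrable hn A hneg _)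
    (by
      refine (pq_integrable hn A hneg (p * ∑ k, C (A j k) * X k)).congr
        (Filter.Eventually.of_forall fun x => ?_)
      simp only [map_mul, ContinuousLinearMap.mul_apply', mul_assoc])
    (pq_integrable hn A hneg _)
    (fun x _ => pq_lineDeriv_poly p j x) (fun x _ => pq_lineDeriv_exp A hsymm j x)
  simp only [ContinuousLinearMap.mul_apply'] at h
  unfold pqI
  rw [← h]
  simp only [map_mul, mul_assoc]

lemma pqI_X_mul (hn : 0 < n) (A B : Matrix (Fin n) (Fin n) ℤ) (hsymm : A.IsSymm)
    (hneg : (-(A.map (fun z : ℤ => (z : ℝ)))).PosDef) (hBA : B * A = 1)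
    (p : MvPolynomial (Fin n) ℤ) (i : Fin n) :
    pqI A (X i * p) = ∑ j, (-(B i j : ℝ)) * pqI A (pderiv j p) := by
  have e : X i * p = ∑ j, C (B i j) * (p * ∑ k, C (A j k) * X k) := by
    have e1 : (X i : MvPolynomial (Fin n) ℤ) = ∑ j, C (B i j) * ∑ k, C (A j k) * X k := by
      simp_rw [Finset.mul_sum]
      rw [Finset.sum_comm]
      simp_rw [← mul_assoc, ← C_mul, ← Finset.sum_mul, ← map_sum, ← Matrix.mul_apply, hBA,
        Matrix.one_apply]
      simp [apply_ite]
    conv_lhs => rw [e1, Finset.sum_mul]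
    exact Finset.sum_congr rfl fun j _ => by ring
  rw [e, pqI_sum hn A hneg]
  refine Finset.sum_congr rfl fun j _ => ?_
  rw [pqI_C_mul, pqI_parts hn A hsymm hneg]
  ring

/-- The perturbative series. -/
def pqF (A : Matrix (Fin n) (Fin n) ℤ) (h g : MvPolynomial (Fin n) ℤ) : PowerSeries ℝ :=
  PowerSeries.mk (pertCoeff A g h)

lemma pqF_add (hn : 0 < n) (A : Matrix (Fin n) (Fin n) ℤ)
    (hneg : (-(A.map (fun z : ℤ => (z : ℝ)))).PosDef) (h p q : MvPolynomial (Fin n) ℤ) :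
    pqF A h (p + q) = pqF A h p + pqF A h q := by
  ext k
  simp [pqF, pq_pertCoeff, add_mul, pqI_add hn A hneg, mul_add]

lemma pqF_C (A : Matrix (Fin n) (Fin n) ℤ) (h : MvPolynomial (Fin n) ℤ) (a : ℤ) :
    pqF A h (C a) = PowerSeries.C (a : ℝ) * pqF A h 1 := by
  ext k
  rw [PowerSeries.coeff_C_mul, pqF, pqF, PowerSeries.coeff_mk, PowerSeries.coeff_mk,
    pq_pertCoeff, pq_pertCoeff, pqI_C_mul, one_mul]
  ring

lemma pqF_X_mul (hn : 0 < n) (A B : Matrix (Fin n) (Fin n) ℤ) (hsymm : A.IsSymm)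
    (hneg : (-(A.map (fun z : ℤ => (z : ℝ)))).PosDef) (hBA : B * A = 1)
    (h g : MvPolynomial (Fin n) ℤ) (i : Fin n) :
    pqF A h (X i * g) = ∑ j, PowerSeries.C (-(B i j : ℝ)) *
      (pqF A h (pderiv j g) + PowerSeries.X * pqF A h (g * pderiv j h)) := by
  ext k
  simp only [map_sum, PowerSeries.coeff_C_mul, map_add]
  simp only [pqF, PowerSeries.coeff_mk, pq_pertCoeff]
  rw [mul_assoc, pqI_X_mul hn A B hsymm hneg hBA, Finset.mul_sum]
  refine Finset.sum_congr rfl fun j _ => ?_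
  cases k with
  | zero => simp
  | succ k =>
    have e : pderiv j (g * h ^ (k + 1)) =
        pderiv j g * h ^ (k + 1) + C ((k + 1 : ℕ) : ℤ) * (g * pderiv j h * h ^ k) := by
      rw [pderiv_mul, pderiv_pow]
      simp
      ring
    rw [PowerSeries.coeff_succ_X_mul, PowerSeries.coeff_mk, pq_pertCoeff, e,
      pqI_add hn A hneg, pqI_C_mul, Nat.factorial_succ]
    have h1 : ((k + 1 : ℕ) : ℝ) ≠ 0 := by positivity
    have h2 : (k.factorial : ℝ) ≠ 0 := by positivity
    push_cast at h1 ⊢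
    field_simp

lemma pq_b0 (hn : 0 < n) (A : Matrix (Fin n) (Fin n) ℤ)
    (hneg : (-(A.map (fun z : ℤ => (z : ℝ)))).PosDef) (h : MvPolynomial (Fin n) ℤ) :
    pertCoeff A 1 h 0 ≠ 0 := by
  have hi := pq_integrable hn A hneg 1
  simp only [map_one, one_mul] at hi
  have := integral_exp_pos hi
  rw [pq_pertCoeff]
  simpa [pqI] using this.ne'

lemma pq_integral (hn : 0 < n) (A B : Matrix (Fin n) (Fin n) ℤ) (hsymm : A.IsSymm)
    (hneg : (-(A.map (fun z : ℤ => (z : ℝ)))).PosDef) (hBA : B * A = 1)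
    (h : MvPolynomial (Fin n) ℤ) (m : ℕ) : ∀ g : MvPolynomial (Fin n) ℤ,
    PowerSeries.coeff m (pqF A h g * (pqF A h 1)⁻¹) ∈ (Int.castRingHom ℝ).range := by
  have hunit : pqF A h 1 * (pqF A h 1)⁻¹ = 1 := by
    apply PowerSeries.mul_inv_cancel
    simpa [pqF] using pq_b0 hn A hneg h
  induction m using Nat.strong_induction_on with
  | _ m ih =>
    have key : ∀ d : ℕ, ∀ (s : Fin n →₀ ℕ) (a : ℤ), s.degree ≤ d →
        PowerSeries.coeff m (pqF A h (monomial s a) * (pqF A h 1)⁻¹)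
          ∈ (Int.castRingHom ℝ).range := by
      intro d
      induction d with
      | zero =>
        intro s a hs
        have hs0 : s = 0 := by
          rw [← Finsupp.degree_eq_zero_iff]; omega
        subst hs0
        change PowerSeries.coeff m (pqF A h (C a) * (pqF A h 1)⁻¹) ∈ _
        rw [pqF_C, mul_assoc, hunit, PowerSeries.coeff_C_mul, PowerSeries.coeff_one]
        refine Subring.mul_mem _ ⟨a, rfl⟩ ?_
        split_ifs
        · exact Subring.one_mem _
        · exact Subring.zero_mem _
      | succ d ihd =>
        intro s a hs
        by_cases hs0 : s = 0
        · exact ihd s a (by simp [hs0])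
        obtain ⟨i, hi⟩ : ∃ i, s i ≠ 0 := by
          by_contra! hc
          exact hs0 (Finsupp.ext hc)
        have hsi : s - Finsupp.single i 1 + Finsupp.single i 1 = s :=
          Finsupp.sub_add_single_one_cancel hi
        set t := s - Finsupp.single i 1 with ht
        have hdeg : t.degree ≤ d := by
          have := congrArg Finsupp.degree hsi
          rw [map_add, Finsupp.degree_single] at this
          omega
        have hmono : monomial s a = X i * monomial t a := by
          rw [X, monomial_mul, one_mul, add_comm, hsi]
        rw [hmono, pqF_X_mul hn A B hsymm hneg hBA, Finset.sum_mul, map_sum]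
        refine Subring.sum_mem _ fun j _ => ?_
        rw [mul_assoc, PowerSeries.coeff_C_mul]
        refine Subring.mul_mem _ ⟨-(B i j), by simp⟩ ?_
        rw [add_mul, map_add]
        refine Subring.add_mem _ ?_ ?_
        · rw [pderiv_monomial]
          refine ihd _ _ (le_trans ?_ hdeg)
          exact Finsupp.degree_mono tsub_le_self
        · rw [mul_assoc]
          cases m with
          | zero =>
            rw [PowerSeries.coeff_zero_X_mul]
            exact Subring.zero_mem _
          | succ m =>
            rw [PowerSeries.coeff_succ_X_mul]
            exact ih m (Nat.lt_succ_self m) _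
    intro g
    induction g using MvPolynomial.induction_on' with
    | monomial s a => exact key _ s a le_rfl
    | add p q hp hq =>
      rw [pqF_add hn A hneg, add_mul, map_add]
      exact Subring.add_mem _ hp hq

end Helpers

/-- Let `A` be an integer symmetric matrix, negative definite
over `ℝ` and invertible over `ℤ`, and let `g, h ∈ ℤ[x_1,…,x_n]`.  With
`a_k = (1/k!)∫ g·h^k·e^{½xᵗAx} dx` and `b_k = (1/k!)∫ h^k·e^{½xᵗAx} dx` the
coefficients of the perturbative expansions of `∫ g·e^{½xᵗAx+λh} dx` and
`∫ e^{½xᵗAx+λh} dx`, one has `b_0 ≠ 0` and every coefficient of the quotient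
`(Σ a_k λ^k)·(Σ b_k λ^k)⁻¹ ∈ ℝ[[λ]]` is an integer. -/
theorem perturbative_quotient_integrality {n : ℕ} (hn : 0 < n)
    (A : Matrix (Fin n) (Fin n) ℤ) (hsymm : A.IsSymm)
    (hneg : (-(A.map (fun z : ℤ => (z : ℝ)))).PosDef)
    (hinv : ∃ B : Matrix (Fin n) (Fin n) ℤ, A * B = 1 ∧ B * A = 1)
    (g h : MvPolynomial (Fin n) ℤ) :
    pertCoeff A 1 h 0 ≠ 0 ∧
    ∀ m : ℕ, ∃ z : ℤ,
      PowerSeries.coeff (R := ℝ) m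
        (PowerSeries.mk (pertCoeff A g h) *
          (PowerSeries.mk (pertCoeff A 1 h))⁻¹) = (z : ℝ) := by
  obtain ⟨B, _, hBA⟩ := hinv
  refine ⟨pq_b0 hn A hneg h, fun m => ?_⟩
  obtain ⟨z, hz⟩ := pq_integral hn A B hsymm hneg hBA h m g
  exact ⟨z, hz.symm⟩

end
end
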